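/- Let μ be an ergodic process on Σ = 𝒜^{ℤ_{≥0}^d} with entropy rate h(μ) = h, let δ ∈ (0, 1/2), and let m = m(k) be any function with m(k) → ∞ and m(k)/k → 0 as k → ∞. Then: (i) for all sufficiently large k, the typical sampling set satisfies log|𝒯_k^μ(δ/2, m(k))| / k^d ≤ h + δ; and (ii) for μ-almost every x and every sufficiently large k, there is n_0 = n_0(x,k) such that 𝜇̃_x^{k,n}(𝒯_k^μ(δ/2, m(k))) > 1 − δ for all n ≥ n_0. -/

import Mathlib

open MeasureTheory Filter Topology

namespace SRU1408

/-- A site of the lattice `ℤ_{≥0}^d`. -/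
abbrev Site (d : ℕ) := Fin d → ℕ

/-- An infinite array over the alphabet `Fin A`, i.e. an element of `Σ = 𝒜^{ℤ_{≥0}^d}`. -/
abbrev Config (A d : ℕ) := Site d → Fin A

/-- A cubical `k`-word, i.e. an element of `Σ^k = 𝒜^{Λ_k}`. -/
abbrev Word (A d k : ℕ) := (Fin d → Fin k) → Fin A

variable {A d : ℕ}

/-- The pattern of `x` on the cube `Λ_k + c`, as a `k`-word. -/
def wordAt (x : Config A d) (k : ℕ) (c : Site d) : Word A d k :=
  fun i => x fun j => c j + (i j : ℕ)

/-- The lattice shift `σ_r`. -/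
def shift (r : Site d) (x : Config A d) : Config A d := fun i => x (i + r)

/-- Stationarity: invariance under all shifts. -/
def Stationary (μ : Measure (Config A d)) : Prop := ∀ r : Site d, μ.map (shift r) = μ

/-- Ergodicity: stationary, and every measurable set invariant under all shifts is trivial. -/
def ErgodicShift (μ : Measure (Config A d)) : Prop :=
  Stationary μ ∧ ∀ E : Set (Config A d), MeasurableSet E →
    (∀ r : Site d, shift r ⁻¹' E = E) → μ E = 0 ∨ μ E = 1

/-- The `k`-word marginal distribution `μ^k`, as a probability vector on `Σ^k`. -/
noncomputable def wordDist (μ : Measure (Config A d)) (k : ℕ) : Word A d k → ℝ :=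
  fun w => (μ {x | wordAt x k 0 = w}).toReal

/-- Base-`A` entropy of a probability vector. -/
noncomputable def entH (A : ℕ) {W : Type*} [Fintype W] (p : W → ℝ) : ℝ :=
  -∑ w, p w * Real.logb A (p w)

/-- `μ` has entropy rate `h` (base-`A` logarithms): `H(μ^n)/n^d → h`. -/
def HasEntropyRate (μ : Measure (Config A d)) (h : ℝ) : Prop :=
  Tendsto (fun n : ℕ => entH A (wordDist μ n) / (n : ℝ) ^ d) atTop (𝓝 h)

/-- The pattern of a `k`-word on the sub-cube `Λ_m + c` (junk value outside the range). -/
def subw [NeZero A] {k : ℕ} (w : Word A d k) (m : ℕ) (c : Site d) : Word A d m :=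
  fun i => if h : ∀ j, c j + (i j : ℕ) < k then w (fun j => ⟨c j + (i j : ℕ), h j⟩) else 0

/-- The empirical non-overlapping `k`-block distribution `𝜇̃_x^{k,n}` of `x` over `Λ_n`. -/
noncomputable def empDist (x : Config A d) (k n : ℕ) : Word A d k → ℝ := fun w =>
  (Set.ncard {r : Fin d → Fin (n / k) | wordAt x k (fun j => k * (r j : ℕ)) = w} : ℝ) /
    ((n / k : ℕ) : ℝ) ^ d

/-- The empirical probability `𝜇̃_x^{k,n}(S)` of a set `S` of `k`-words. -/
noncomputable def empProb (x : Config A d) (k n : ℕ) (S : Set (Word A d k)) : ℝ :=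
  (Set.ncard {r : Fin d → Fin (n / k) | wordAt x k (fun j => k * (r j : ℕ)) ∈ S} : ℝ) /
    ((n / k : ℕ) : ℝ) ^ d

/-- `k(n) = ⌊(log_A n^d)^{1/d}⌋`. -/
noncomputable def kOf (A d n : ℕ) : ℕ :=
  ⌊(Real.logb A ((n : ℝ) ^ d)) ^ (1 / (d : ℝ))⌋₊

/-- The level-`δ` entropy typical set `C_m^μ(δ)`, relative to the entropy rate value `h`. -/
noncomputable def entropyTypical (μ : Measure (Config A d)) (h δ : ℝ) (m : ℕ) :
    Set (Word A d m) :=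
  {w | (A : ℝ) ^ (-((m : ℝ) ^ d * (h + δ))) ≤ wordDist μ m w ∧
    wordDist μ m w ≤ (A : ℝ) ^ (-((m : ℝ) ^ d * (h - δ)))}

/-- The typical sampling set `𝒯_k^μ(δ, m)`: words having, for some offset `p ∈ Λ_m`, at least
`(1-δ)(k/m)^d` blocks of the `p`-shifted regular `m`-grid carrying entropy typical words. -/
noncomputable def samplingTypical [NeZero A] (μ : Measure (Config A d)) (h δ : ℝ) (m k : ℕ) :
    Set (Word A d k) :=
  {w | ∃ p : Site d, (∀ j, p j < m) ∧
    (1 - δ) * ((k : ℝ) / (m : ℝ)) ^ d ≤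
      (Set.ncard {r : Site d | (∀ j, m * r j + p j + m ≤ k) ∧
        subw w m (fun j => m * r j + p j) ∈ entropyTypical μ h δ m} : ℝ)}

/-!
A word of `𝒯_k` is determined by an offset, a set of at least `(1-δ)(k/m)^d` grid blocks, a typical
`m`-word on each of them, and arbitrary letters elsewhere. There are at most `A^{m^d(h+δ)}` typical
`m`-words, while the choices of offset and block set contribute only a factor `A^{o(k^d)}`, so
`log |𝒯_k| ≤ (h+2δ)k^d` for large `k`.

For the empirical mass, call a site of `x` bad if the `m`-word found there is not entropy typical.
Averaging over the offsets shows that a `k`-block whose word is not in `𝒯_k` contains more than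
`(δ/2)k^d` bad sites, so few blocks are of this kind as soon as bad sites are rare. By the pointwise
ergodic theorem their density is `1 - μ^m(C_m)`, which must be shown to tend to `0`.

This Shannon–McMillan theorem rests on one inequality: almost surely
`μ^m(x(Λ_m)) ≥ A^{-m^d(h+ε)}` for large `m`. By Markov's inequality and Borel–Cantelli, `μ^m` may be
replaced by any sequence of measures of bounded total mass. Take the mixture over all offsets of the
measures that fill the blocks of a shifted `k`-grid independently according to `μ^k`; with the best
offset, `x(Λ_m)` costs at most the ergodic average of the information content of `k`-blocks, which
is close to `h` by the choice of `k`. Conversely, words that are too probable cannot carry much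
mass, for `H(μ^m)/m^d → h` while almost all the mass lies on words of probability at least
`A^{-m^d(h+ε)}`.
-/

/-! ### Ergodic actions of monoids -/

section Hilbert

variable {E : Type*} [NormedAddCommGroup E] [InnerProductSpace ℝ E] {K : Set E}

theorem exists_mem_forall_norm_le_imp_eq (hne : K.Nonempty) (hcompl : IsComplete K)
    (hconv : Convex ℝ K) : ∃ v ∈ K, ∀ u ∈ K, ‖u‖ ≤ ‖v‖ → u = v := by
  obtain ⟨v, hv, hmin⟩ := exists_norm_eq_iInf_of_complete_convex hne hcompl hconv 0
  rw [norm_eq_iInf_iff_real_inner_le_zero hconv hv] at hmin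
  refine ⟨v, hv, fun u hu hle => sub_eq_zero.1 (norm_le_zero_iff.1 ?_)⟩
  have hinner := hmin u hu
  rw [zero_sub, inner_neg_left, inner_sub_right, real_inner_self_eq_norm_sq] at hinner
  have hexpand := norm_sub_sq_real u v
  rw [real_inner_comm] at hexpand
  nlinarith [norm_nonneg u, norm_nonneg v, norm_nonneg (u - v)]

-- Alaoglu–Birkhoff: contractions fix the point of smallest norm.
theorem exists_mem_closure_forall_map_eq [CompleteSpace E] (hne : K.Nonempty)
    (hconv : Convex ℝ K) {ι : Type*} {T : ι → E → E} (hcont : ∀ r, Continuous (T r))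
    (hle : ∀ r v, ‖T r v‖ ≤ ‖v‖) (hmaps : ∀ r, Set.MapsTo (T r) K K) :
    ∃ v ∈ closure K, ∀ r, T r v = v := by
  obtain ⟨v, hv, huniq⟩ := exists_mem_forall_norm_le_imp_eq hne.closure
    isClosed_closure.isComplete hconv.closure
  exact ⟨v, hv, fun r => huniq _ ((hmaps r).closure (hcont r) hv) (hle r v)⟩

end Hilbert

section Ergodic

variable {M Ω : Type*}

variable (M) in
/-- The convex hull of the translates of an observable `f` along the action of `M`: the space of
generalised averages in which the mean ergodic theorem looks for an almost constant function. -/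
def orbitHull [VAdd M Ω] (f : Ω → ℝ) : Set (Ω → ℝ) :=
  convexHull ℝ (Set.range fun (r : M) x => f (r +ᵥ x))

theorem comp_vadd_mem_orbitHull [AddMonoid M] [AddAction M Ω] {f g : Ω → ℝ}
    (hg : g ∈ orbitHull M f) (r : M) : (fun x => g (r +ᵥ x)) ∈ orbitHull M f := by
  have himage := Set.mem_image_of_mem (LinearMap.funLeft ℝ ℝ (r +ᵥ · : Ω → Ω)) hg
  rw [orbitHull, LinearMap.image_convexHull] at himage
  refine convexHull_mono ?_ himage
  rintro _ ⟨_, ⟨s, rfl⟩, rfl⟩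
  exact ⟨s + r, funext fun x => by simp [LinearMap.funLeft_apply, add_vadd]⟩

variable [MeasurableSpace Ω] {μ : Measure Ω}

-- Without inverses, an a.e. invariant set is made invariant by passing to its eventual version.
theorem ergodicVAdd_of_forall_invariant [AddCommMonoid M] [Countable M] [AddAction M Ω]
    [MeasurableConstVAdd M Ω] [VAddInvariantMeasure M Ω μ] [IsProbabilityMeasure μ]
    (h : ∀ s, MeasurableSet s → (∀ r : M, (r +ᵥ ·) ⁻¹' s = s) → μ s = 0 ∨ μ s = 1) :
    ErgodicVAdd M Ω μ := by
  refine ⟨fun {s} hs hinv => ?_⟩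
  let E : Set Ω := ⋃ N : M, ⋂ i : M, ((i + N) +ᵥ ·) ⁻¹' s
  have mem_E {x : Ω} : x ∈ E ↔ ∃ N : M, ∀ i, (i + N) +ᵥ x ∈ s := by simp [E]
  have hE : MeasurableSet E :=
    .iUnion fun N => .iInter fun i => measurable_const_vadd (i + N) hs
  have hEs : E =ᵐ[μ] s := by
    filter_upwards [ae_all_iff.2 fun r => (hinv r).mem_iff] with x hx
    refine propext (mem_E.trans ⟨fun ⟨N, hN⟩ => ?_, fun hxs => ⟨0, fun i => (hx _).2 hxs⟩⟩)
    exact (hx _).1 (hN 0)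
  refine EventuallyConst.congr ?_ hEs
  have hE01 : μ E = 0 ∨ μ E = 1 := by
    refine h E hE fun r => Set.ext fun x => mem_E.trans (Iff.trans ⟨?_, ?_⟩ mem_E.symm)
    · rintro ⟨N, hN⟩
      exact ⟨N + r, fun i => by simpa only [vadd_vadd, add_assoc] using hN i⟩
    · rintro ⟨N, hN⟩
      exact ⟨N, fun i => by simpa only [vadd_vadd, add_right_comm] using hN (i + r)⟩
  rw [eventuallyConst_set']
  exact hE01.imp ae_eq_empty.2 fun h1 => ae_eq_univ.2 ((prob_compl_eq_zero_iff hE).2 h1)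

theorem exists_ae_eq_const_of_comp_vadd_ae_eq (M : Type*) [VAdd M Ω] [ErgodicVAdd M Ω μ]
    {X : Type*} [Nonempty X] [MeasurableSpace X] [MeasurableSpace.CountablySeparated X]
    {g : Ω → X} (hg : NullMeasurable g μ)
    (hinv : ∀ r : M, (fun x => g (r +ᵥ x)) =ᵐ[μ] g) : ∃ c, g =ᵐ[μ] fun _ => c := by
  refine Filter.exists_eventuallyEq_const_of_forall_separating MeasurableSet fun U hU => ?_
  refine eventuallyConst_pred.1 (aeconst_of_forall_preimage_vadd_ae_eq M (hg hU) fun r => ?_)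
  filter_upwards [hinv r] with x hx
  exact congrArg (· ∈ U) hx

theorem measurable_of_mem_orbitHull [VAdd M Ω] [MeasurableConstVAdd M Ω] {f g : Ω → ℝ}
    (hf : Measurable f) (hg : g ∈ orbitHull M f) : Measurable g :=
  convexHull_min (t := {g | Measurable g})
    (Set.range_subset_iff.2 fun r => hf.comp (measurable_const_vadd r))
    (fun _ h₁ _ h₂ a b _ _ _ => (Measurable.const_mul h₁ a).add (Measurable.const_mul h₂ b)) hg

theorem memLp_of_mem_orbitHull [VAdd M Ω] [MeasurableConstVAdd M Ω] [VAddInvariantMeasure M Ω μ]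
    {p : ENNReal} {f g : Ω → ℝ} (hf : MemLp f p μ) (hg : g ∈ orbitHull M f) : MemLp g p μ :=
  convexHull_min (t := {g | MemLp g p μ})
    (Set.range_subset_iff.2 fun r => hf.comp_measurePreserving (measurePreserving_vadd r μ))
    (fun _ h₁ _ h₂ a b _ _ _ => (MemLp.const_mul h₁ a).add (MemLp.const_mul h₂ b)) hg

theorem integral_eq_of_mem_orbitHull [VAdd M Ω] [MeasurableConstVAdd M Ω]
    [VAddInvariantMeasure M Ω μ] {f g : Ω → ℝ} (hf : Integrable f μ) (hg : g ∈ orbitHull M f) :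
    ∫ x, g x ∂μ = ∫ x, f x ∂μ := by
  refine (convexHull_min (t := {g | Integrable g μ ∧ ∫ x, g x ∂μ = ∫ x, f x ∂μ}) ?_ ?_ hg).2
  · refine Set.range_subset_iff.2 fun r => ?_
    have hr := measurePreserving_vadd r μ
    refine ⟨hr.integrable_comp_of_integrable hf, ?_⟩
    rw [← integral_map hr.measurable.aemeasurable (by rw [hr.map_eq]; exact hf.1), hr.map_eq]
  · rintro g₁ ⟨hi₁, he₁⟩ g₂ ⟨hi₂, he₂⟩ a b - - hab
    refine ⟨(hi₁.const_mul a).add (hi₂.const_mul b), ?_⟩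
    calc ∫ x, a * g₁ x + b * g₂ x ∂μ = a * ∫ x, g₁ x ∂μ + b * ∫ x, g₂ x ∂μ := by
          rw [integral_add (hi₁.const_mul a) (hi₂.const_mul b), integral_const_mul,
            integral_const_mul]
      _ = ∫ x, f x ∂μ := by rw [he₁, he₂, ← add_mul, hab, one_mul]

theorem exists_const_mem_closure_orbitHull (M : Type*) [AddMonoid M] [AddAction M Ω]
    [MeasurableConstVAdd M Ω] [ErgodicVAdd M Ω μ] {f : Ω → ℝ} (hf : MemLp f 2 μ) :
    ∃ c : ℝ, ∃ v ∈ closure {G : Lp ℝ 2 μ | ∃ g ∈ orbitHull M f, G =ᵐ[μ] g},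
      v =ᵐ[μ] fun _ => c := by
  let T (r : M) : Lp ℝ 2 μ →ₗᵢ[ℝ] Lp ℝ 2 μ :=
    Lp.compMeasurePreservingₗᵢ ℝ (r +ᵥ ·) (measurePreserving_vadd r μ)
  have hT (r : M) (G : Lp ℝ 2 μ) : T r G =ᵐ[μ] fun x => G (r +ᵥ x) :=
    Lp.coeFn_compMeasurePreserving G (measurePreserving_vadd r μ)
  let K : Set (Lp ℝ 2 μ) := {G | ∃ g ∈ orbitHull M f, G =ᵐ[μ] g}
  have hne : K.Nonempty := ⟨hf.toLp f, f, subset_convexHull ℝ _ ⟨0, by simp⟩, hf.coeFn_toLp⟩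
  have hconv : Convex ℝ K := by
    rintro G₁ ⟨g₁, hg₁, he₁⟩ G₂ ⟨g₂, hg₂, he₂⟩ a b ha hb hab
    refine ⟨a • g₁ + b • g₂, convex_convexHull ℝ _ hg₁ hg₂ ha hb hab, ?_⟩
    exact (Lp.coeFn_add _ _).trans <| ((Lp.coeFn_smul a G₁).trans (he₁.const_smul a)).add
      ((Lp.coeFn_smul b G₂).trans (he₂.const_smul b))
  obtain ⟨v, hv, hfix⟩ := exists_mem_closure_forall_map_eq hne hconv (T := fun r => T r)
    (fun r => (T r).continuous) (fun r G => ((T r).norm_map G).le)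
    (fun r G ⟨g, hg, he⟩ => ⟨_, comp_vadd_mem_orbitHull hg r, (hT r G).trans
      ((measurePreserving_vadd r μ).quasiMeasurePreserving.ae_eq_comp he)⟩)
  have hmeas : NullMeasurable v μ := (Lp.stronglyMeasurable v).measurable.nullMeasurable
  obtain ⟨c, hc⟩ := exists_ae_eq_const_of_comp_vadd_ae_eq M hmeas fun r => by
    simpa only [hfix r] using (hT r v).symm
  exact ⟨c, v, hv, hc⟩

theorem exists_mem_orbitHull_integral_abs_sub_integral_le [AddMonoid M] [AddAction M Ω]
    [MeasurableConstVAdd M Ω] [ErgodicVAdd M Ω μ] [IsProbabilityMeasure μ] {f : Ω → ℝ}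
    (hf : MemLp f 2 μ) {ε : ℝ} (hε : 0 < ε) :
    ∃ g ∈ orbitHull M f, ∫ x, |g x - ∫ y, f y ∂μ| ∂μ ≤ ε := by
  obtain ⟨c, v, hv, hvc⟩ := exists_const_mem_closure_orbitHull M hf
  have happrox : ∀ η > 0, ∃ g ∈ orbitHull M f, ∫ x, |g x - c| ∂μ ≤ η := by
    intro η hη
    obtain ⟨G, ⟨g, hg, hGg⟩, hdist⟩ := Metric.mem_closure_iff.1 hv η hη
    refine ⟨g, hg, ?_⟩
    have hsub : (fun x => g x - c) =ᵐ[μ] -(v - G : Lp ℝ 2 μ) := by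
      filter_upwards [Lp.coeFn_sub v G, hvc, hGg] with x hx hxv hxG
      rw [Pi.neg_apply, hx, Pi.sub_apply, hxv, hxG, neg_sub]
    have hnorm : eLpNorm (fun x => g x - c) 1 μ ≤ eLpNorm (v - G : Lp ℝ 2 μ) 2 μ := by
      rw [eLpNorm_congr_ae hsub, eLpNorm_neg]
      exact eLpNorm_le_eLpNorm_of_exponent_le (by norm_num) (Lp.aestronglyMeasurable _)
    rw [dist_eq_norm, Lp.norm_def] at hdist
    calc ∫ x, |g x - c| ∂μ = (eLpNorm (fun x => g x - c) 1 μ).toReal := by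
          rw [eLpNorm_one_eq_lintegral_enorm]
          exact integral_norm_eq_lintegral_enorm
            ((memLp_of_mem_orbitHull hf hg).1.sub aestronglyMeasurable_const)
      _ ≤ η := (ENNReal.toReal_mono (Lp.eLpNorm_ne_top _) hnorm).trans hdist.le
  have hfi : Integrable f μ := hf.integrable (by norm_num)
  have hc : c = ∫ x, f x ∂μ := by
    refine eq_of_abs_sub_le_all fun η hη => ?_
    obtain ⟨g, hg, hgc⟩ := happrox η hη
    have hgi : Integrable g μ := (memLp_of_mem_orbitHull hf hg).integrable (by norm_num)
    calc |c - ∫ x, f x ∂μ| = |∫ x, (g x - c) ∂μ| := by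
          rw [integral_sub hgi (integrable_const c), integral_eq_of_mem_orbitHull hfi hg,
            abs_sub_comm]
          simp
      _ ≤ η := abs_integral_le_integral_abs.trans hgc
  exact hc ▸ happrox ε hε

end Ergodic

/-! ### Cubes in the lattice -/

/-- The cube `Λ_n + c` as a finite set of sites; `Λ_n` itself is `cube 0 n`. -/
def cube (c : Site d) (n : ℕ) : Finset (Site d) :=
  Fintype.piFinset fun j => Finset.Ico (c j) (c j + n)

theorem mem_cube {c i : Site d} {n : ℕ} : i ∈ cube c n ↔ ∀ j, c j ≤ i j ∧ i j < c j + n := by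
  simp [cube]

theorem mem_cube_zero {i : Site d} {n : ℕ} : i ∈ cube 0 n ↔ ∀ j, i j < n := by simp [mem_cube]

theorem card_cube (c : Site d) (n : ℕ) : (cube c n).card = n ^ d := by simp [cube]

theorem cube_mono (c : Site d) {m n : ℕ} (h : m ≤ n) : cube c m ⊆ cube c n := fun _ hi =>
  mem_cube.2 fun j => ⟨(mem_cube.1 hi j).1, (mem_cube.1 hi j).2.trans_le (by gcongr)⟩

theorem map_addRightEmbedding_cube (c : Site d) (n : ℕ) :
    (cube 0 n).map (addRightEmbedding c) = cube c n := by
  ext i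
  simp only [Finset.mem_map, addRightEmbedding_apply]
  constructor
  · rintro ⟨a, ha, rfl⟩
    exact mem_cube.2 fun j => ⟨Nat.le_add_left _ _, by
      simpa [add_comm (c j)] using mem_cube_zero.1 ha j⟩
  · intro h
    rw [mem_cube] at h
    exact ⟨i - c, mem_cube_zero.2 fun j => Nat.sub_lt_left_of_lt_add (h j).1 (h j).2,
      tsub_add_cancel_of_le fun j => (h j).1⟩

theorem sum_cube_zero_add {β : Type*} [AddCommMonoid β] (g : Site d → β) (c : Site d) (n : ℕ) :
    ∑ i ∈ cube 0 n, g (i + c) = ∑ i ∈ cube c n, g i := by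
  simp only [← map_addRightEmbedding_cube c, Finset.sum_map, addRightEmbedding_apply]

theorem tendsto_sub_pow_div_pow (d : ℕ) {m : ℕ → ℕ}
    (hm : Tendsto (fun k : ℕ => (m k : ℝ) / k) atTop (𝓝 0)) :
    Tendsto (fun k : ℕ => ((k - m k : ℕ) : ℝ) ^ d / (k : ℝ) ^ d) atTop (𝓝 1) := by
  have hlim : Tendsto (fun k : ℕ => (1 - (m k : ℝ) / k) ^ d) atTop (𝓝 1) := by
    simpa using (hm.const_sub 1).pow d
  refine hlim.congr' ?_
  filter_upwards [hm.eventually (gt_mem_nhds one_pos), eventually_gt_atTop 0] with k hmk hk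
  have hk' : (0 : ℝ) < k := Nat.cast_pos.2 hk
  rw [div_lt_one hk', Nat.cast_lt] at hmk
  rw [← div_pow, Nat.cast_sub hmk.le, sub_div, div_self hk'.ne']

theorem eventually_mul_pow_le_sub_pow (d : ℕ) {m : ℕ → ℕ}
    (hm : Tendsto (fun k : ℕ => (m k : ℝ) / k) atTop (𝓝 0)) {ε : ℝ} (hε : 0 < ε) :
    ∀ᶠ k : ℕ in atTop, (1 - ε) * (k : ℝ) ^ d ≤ ((k - m k : ℕ) : ℝ) ^ d := by
  filter_upwards [(tendsto_sub_pow_div_pow d hm).eventually (lt_mem_nhds (sub_lt_self 1 hε)),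
    eventually_gt_atTop 0] with k hlt hk
  exact ((lt_div_iff₀ (by positivity)).1 hlt).le

theorem exists_pairwiseDisjoint_cube (Z : Finset (Site d)) {n : Site d → ℕ}
    (hn : ∀ i ∈ Z, 1 ≤ n i) :
    ∃ U ⊆ Z, (U : Set (Site d)).PairwiseDisjoint (fun i => cube i (n i)) ∧
      Z.card ≤ 3 ^ d * ∑ b ∈ U, n b ^ d := by
  classical
  obtain ⟨u, huZ, hdisj, hcover⟩ := Vitali.exists_disjoint_subfamily_covering_enlargement
    (fun i => (cube i (n i) : Set (Site d))) Z (fun i => (n i : ℝ)) 2 one_lt_two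
    (fun i _ => Nat.cast_nonneg _) (Z.sup n : ℕ)
    (fun i hi => Nat.cast_le.2 (Finset.le_sup hi))
    (fun i hi => ⟨i, mem_cube.2 fun j => ⟨le_rfl, Nat.lt_add_of_pos_right (hn i hi)⟩⟩)
  have hufin : u.Finite := Z.finite_toSet.subset huZ
  refine ⟨hufin.toFinset, fun i hi => huZ (hufin.mem_toFinset.1 hi), fun a ha b hb hab =>
    Finset.disjoint_coe.1 (hdisj (hufin.mem_toFinset.1 ha) (hufin.mem_toFinset.1 hb) hab), ?_⟩
  -- A cube meeting `cube b (n b)`, of at most twice its side, starts in the threefold enlargement.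
  have henlarge : Z ⊆ hufin.toFinset.biUnion fun b =>
      Fintype.piFinset fun j => Finset.Ico (b j + 1 - 2 * n b) (b j + n b) := by
    intro a ha
    obtain ⟨b, hb, ⟨s, hsa, hsb⟩, hab⟩ := hcover a ha
    rw [Finset.mem_coe, mem_cube] at hsa hsb
    have hab' : n a ≤ 2 * n b := by exact_mod_cast hab
    refine Finset.mem_biUnion.2 ⟨b, hufin.mem_toFinset.2 hb, Fintype.mem_piFinset.2 fun j => ?_⟩
    have := hsa j
    have := hsb j
    rw [Finset.mem_Ico]
    omega
  refine (Finset.card_le_card henlarge).trans (Finset.card_biUnion_le.trans ?_)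
  rw [Finset.mul_sum]
  refine Finset.sum_le_sum fun b _ => ?_
  rw [Fintype.card_piFinset, ← mul_pow]
  refine (Finset.prod_le_pow_card _ _ (3 * n b) fun j _ => ?_).trans (by simp)
  rw [Nat.card_Ico]
  omega

theorem mul_card_le_of_forall_le_sum_cube {φ : Site d → ℝ} (hφ : 0 ≤ φ) {t : ℝ} (ht : 0 ≤ t)
    {S Z : Finset (Site d)} {n : Site d → ℕ}
    (hn : ∀ i ∈ Z, 1 ≤ n i ∧ cube i (n i) ⊆ S ∧ t * (n i : ℝ) ^ d ≤ ∑ a ∈ cube i (n i), φ a) :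
    t * Z.card ≤ 3 ^ d * ∑ i ∈ S, φ i := by
  classical
  obtain ⟨U, hUZ, hdisj, hcard⟩ := exists_pairwiseDisjoint_cube Z fun i hi => (hn i hi).1
  have hcard' : (Z.card : ℝ) ≤ 3 ^ d * ∑ b ∈ U, (n b : ℝ) ^ d := by exact_mod_cast hcard
  calc t * Z.card ≤ t * (3 ^ d * ∑ b ∈ U, (n b : ℝ) ^ d) := by gcongr
    _ = 3 ^ d * ∑ b ∈ U, t * (n b : ℝ) ^ d := by rw [← Finset.mul_sum, mul_left_comm]
    _ ≤ 3 ^ d * ∑ b ∈ U, ∑ a ∈ cube b (n b), φ a := by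
        gcongr with b hb
        exact (hn b (hUZ hb)).2.2
    _ = 3 ^ d * ∑ i ∈ U.biUnion fun b => cube b (n b), φ i := by rw [Finset.sum_biUnion hdisj]
    _ ≤ 3 ^ d * ∑ i ∈ S, φ i := by
        gcongr
        · exact fun i _ _ => hφ i
        · exact Finset.biUnion_subset.2 fun b hb => (hn b (hUZ hb)).2.1

/-! ### The pointwise ergodic theorem for lattice actions -/

section Lattice

variable {Ω : Type*} [AddAction (Site d) Ω] {f g : Ω → ℝ} {B : ℝ}

variable (d) in
/-- The sum of the observable `f` along the orbit of `x` over the cube `Λ_n`. -/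
def cubeSum (f : Ω → ℝ) (n : ℕ) (x : Ω) : ℝ := ∑ i ∈ cube (0 : Site d) n, f (i +ᵥ x)

theorem cubeSum_vadd (f : Ω → ℝ) (n : ℕ) (c : Site d) (x : Ω) :
    cubeSum d f n (c +ᵥ x) = ∑ i ∈ cube c n, f (i +ᵥ x) := by
  simp only [cubeSum, vadd_vadd, sum_cube_zero_add fun i => f (i +ᵥ x)]

theorem cubeSum_comp_vadd (f : Ω → ℝ) (n : ℕ) (c : Site d) (x : Ω) :
    cubeSum d (fun y => f (c +ᵥ y)) n x = cubeSum d f n (c +ᵥ x) := by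
  simp only [cubeSum, vadd_vadd, add_comm c]

theorem cubeSum_const (c : ℝ) (n : ℕ) (x : Ω) :
    cubeSum d (fun _ => c) n x = c * (n : ℝ) ^ d := by
  simp [cubeSum, card_cube, mul_comm]

theorem abs_sum_sub_sum_le_of_subset {ι : Type*} {s u : Finset ι} (hu : u ⊆ s) {φ : ι → ℝ}
    (hφ : ∀ i, |φ i| ≤ B) : |∑ i ∈ s, φ i - ∑ i ∈ u, φ i| ≤ B * (s.card - u.card) := by
  classical
  rw [← Finset.sum_sdiff hu, add_sub_cancel_right]
  calc |∑ i ∈ s \ u, φ i| ≤ ∑ _i ∈ s \ u, B :=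
        (Finset.abs_sum_le_sum_abs _ _).trans (Finset.sum_le_sum fun i _ => hφ i)
    _ = B * (s.card - u.card) := by
        rw [Finset.sum_const, nsmul_eq_mul, Finset.card_sdiff_of_subset hu,
          Nat.cast_sub (Finset.card_le_card hu), mul_comm]

theorem abs_cubeSum_vadd_sub_le (hf : ∀ x, |f x| ≤ B) {c : Site d} {R : ℕ} (hR : ∀ j, c j ≤ R)
    (n : ℕ) (x : Ω) :
    |cubeSum d f n (c +ᵥ x) - cubeSum d f n x| ≤
      2 * B * ((n : ℝ) ^ d - ((n - R : ℕ) : ℝ) ^ d) := by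
  have hinter : cube c (n - R) ⊆ cube 0 n := fun i hi => mem_cube_zero.2 fun j => by
    have := mem_cube.1 hi j
    have := hR j
    omega
  have h₁ := abs_sum_sub_sum_le_of_subset (cube_mono c (Nat.sub_le n R))
    fun i => hf (i +ᵥ x)
  have h₀ := abs_sum_sub_sum_le_of_subset hinter fun i => hf (i +ᵥ x)
  simp only [card_cube, Nat.cast_pow] at h₁ h₀
  rw [cubeSum_vadd]
  calc |∑ i ∈ cube c n, f (i +ᵥ x) - cubeSum d f n x|
      ≤ |∑ i ∈ cube c n, f (i +ᵥ x) - ∑ i ∈ cube c (n - R), f (i +ᵥ x)| +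
        |∑ i ∈ cube c (n - R), f (i +ᵥ x) - cubeSum d f n x| := abs_sub_le _ _ _
    _ ≤ _ := by rw [abs_sub_comm _ (cubeSum d f n x), cubeSum]; linarith

theorem abs_cubeSum_sub_le (g : Ω → ℝ) (c : ℝ) (n : ℕ) (x : Ω) :
    |cubeSum d g n x - c * (n : ℝ) ^ d| ≤ cubeSum d (fun y => |g y - c|) n x := by
  rw [← cubeSum_const c n x, cubeSum, cubeSum, ← Finset.sum_sub_distrib]
  exact Finset.abs_sum_le_sum_abs _ _

variable (d) in
/-- `g` and `f` have asymptotically the same averages over large cubes, uniformly in the starting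
point. -/
def SameAverages (f g : Ω → ℝ) : Prop :=
  ∀ ε > 0, ∀ᶠ n : ℕ in atTop, ∀ x, |cubeSum d g n x - cubeSum d f n x| ≤ ε * (n : ℝ) ^ d

theorem sameAverages_comp_vadd (hf : ∀ x, |f x| ≤ B) (c : Site d) :
    SameAverages d f (fun x => f (c +ᵥ x)) := by
  intro ε hε
  have hR : ∀ j, c j ≤ ∑ j, c j := fun j =>
    Finset.single_le_sum (fun _ _ => Nat.zero_le _) (Finset.mem_univ j)
  filter_upwards [eventually_mul_pow_le_sub_pow d
    (tendsto_const_div_atTop_nhds_zero_nat ((∑ j, c j : ℕ) : ℝ))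
    (show 0 < ε / (2 * |B| + 1) by positivity)] with n hn x
  rw [cubeSum_comp_vadd]
  calc |cubeSum d f n (c +ᵥ x) - cubeSum d f n x|
      ≤ 2 * |B| * ((n : ℝ) ^ d - ((n - ∑ j, c j : ℕ) : ℝ) ^ d) :=
        abs_cubeSum_vadd_sub_le (fun x => (hf x).trans (le_abs_self B)) hR n x
    _ ≤ 2 * |B| * (ε / (2 * |B| + 1) * (n : ℝ) ^ d) := by gcongr; linarith
    _ = 2 * |B| / (2 * |B| + 1) * (ε * (n : ℝ) ^ d) := by ring
    _ ≤ ε * (n : ℝ) ^ d :=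
        mul_le_of_le_one_left (by positivity) ((div_le_one (by positivity)).2 (by linarith))

theorem convex_setOf_sameAverages (f : Ω → ℝ) : Convex ℝ {g | SameAverages d f g} := by
  intro g₁ h₁ g₂ h₂ a b ha hb hab ε hε
  filter_upwards [h₁ ε hε, h₂ ε hε] with n hn₁ hn₂ x
  have hcomb : cubeSum d (a • g₁ + b • g₂) n x - cubeSum d f n x =
      a * (cubeSum d g₁ n x - cubeSum d f n x) + b * (cubeSum d g₂ n x - cubeSum d f n x) := by
    simp only [cubeSum, Pi.add_apply, Pi.smul_apply, smul_eq_mul, Finset.sum_add_distrib,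
      ← Finset.mul_sum]
    linear_combination (∑ i ∈ cube (0 : Site d) n, f (i +ᵥ x)) * hab
  calc |cubeSum d (a • g₁ + b • g₂) n x - cubeSum d f n x|
      ≤ a * |cubeSum d g₁ n x - cubeSum d f n x| + b * |cubeSum d g₂ n x - cubeSum d f n x| := by
        rw [hcomb]
        refine (abs_add_le _ _).trans_eq ?_
        rw [abs_mul, abs_mul, abs_of_nonneg ha, abs_of_nonneg hb]
    _ ≤ a * (ε * (n : ℝ) ^ d) + b * (ε * (n : ℝ) ^ d) := by
        gcongr
        exacts [hn₁ x, hn₂ x]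
    _ = ε * (n : ℝ) ^ d := by rw [← add_mul, hab, one_mul]

theorem sameAverages_of_mem_orbitHull (hf : ∀ x, |f x| ≤ B) (hg : g ∈ orbitHull (Site d) f) :
    SameAverages d f g :=
  convexHull_min (Set.range_subset_iff.2 fun r => sameAverages_comp_vadd hf r)
    (convex_setOf_sameAverages f) hg

theorem mul_cubeSum_indicator_le {φ : Ω → ℝ} (hφ : 0 ≤ φ) {t : ℝ} (ht : 0 ≤ t) (M N : ℕ) (x : Ω) :
    t * cubeSum d (Set.indicator
      {y | ∃ n : ℕ, 1 ≤ n ∧ n ≤ M ∧ t * (n : ℝ) ^ d < cubeSum d φ n y} 1) N x ≤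
      3 ^ d * cubeSum d φ (N + M) x := by
  classical
  set E := {y : Ω | ∃ n : ℕ, 1 ≤ n ∧ n ≤ M ∧ t * (n : ℝ) ^ d < cubeSum d φ n y}
  have hexists : ∀ i ∈ (cube (0 : Site d) N).filter fun i => i +ᵥ x ∈ E,
      ∃ n : ℕ, 1 ≤ n ∧ n ≤ M ∧ t * (n : ℝ) ^ d < cubeSum d φ n (i +ᵥ x) :=
    fun i hi => (Finset.mem_filter.1 hi).2
  choose! n hn using hexists
  have hcount : cubeSum d (E.indicator 1) N x =
      ((cube (0 : Site d) N).filter fun i => i +ᵥ x ∈ E).card := by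
    simp only [cubeSum, Set.indicator_apply, Pi.one_apply, Finset.sum_boole]
  rw [hcount]
  refine mul_card_le_of_forall_le_sum_cube (n := n) (fun i => hφ _) ht fun i hi => ?_
  obtain ⟨h1, hM, hlt⟩ := hn i hi
  refine ⟨h1, fun a ha => mem_cube_zero.2 fun j => ?_, by rw [← cubeSum_vadd]; exact hlt.le⟩
  have := mem_cube_zero.1 (Finset.mem_filter.1 hi).1 j
  have := mem_cube.1 ha j
  omega

variable [MeasurableSpace Ω] [MeasurableConstVAdd (Site d) Ω] {μ : Measure Ω}

theorem measurable_cubeSum (hf : Measurable f) (n : ℕ) : Measurable (cubeSum d f n) :=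
  Finset.measurable_sum _ fun i _ => hf.comp (measurable_const_vadd i)

theorem measurableSet_exists_lt_cubeSum (hf : Measurable f) (t : ℝ) (M : ℕ) :
    MeasurableSet {x | ∃ n : ℕ, 1 ≤ n ∧ n ≤ M ∧ t * (n : ℝ) ^ d < cubeSum d f n x} := by
  have hset : {x | ∃ n : ℕ, 1 ≤ n ∧ n ≤ M ∧ t * (n : ℝ) ^ d < cubeSum d f n x} =
      ⋃ n : ℕ, ⋃ _ : 1 ≤ n ∧ n ≤ M, {x | t * (n : ℝ) ^ d < cubeSum d f n x} := by
    ext x; simp [and_assoc]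
  rw [hset]
  exact .iUnion fun n => .iUnion fun _ =>
    measurableSet_lt measurable_const (measurable_cubeSum hf n)

section Invariant

variable [VAddInvariantMeasure (Site d) Ω μ]

theorem integrable_cubeSum (hf : Integrable f μ) (n : ℕ) : Integrable (cubeSum d f n) μ :=
  integrable_finsetSum _ fun i _ => (measurePreserving_vadd i μ).integrable_comp_of_integrable hf

theorem integral_cubeSum (hf : Integrable f μ) (n : ℕ) :
    ∫ x, cubeSum d f n x ∂μ = (n : ℝ) ^ d * ∫ x, f x ∂μ := by
  have hi (i : Site d) : Integrable (fun x => f (i +ᵥ x)) μ :=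
    (measurePreserving_vadd i μ).integrable_comp_of_integrable hf
  have htranslate (i : Site d) : ∫ x, f (i +ᵥ x) ∂μ = ∫ x, f x ∂μ :=
    integral_eq_of_mem_orbitHull (M := Site d) hf (subset_convexHull ℝ _ ⟨i, rfl⟩)
  simp [cubeSum, integral_finsetSum _ fun i _ => hi i, htranslate, card_cube]

variable [IsFiniteMeasure μ]

theorem measureReal_exists_le_lt_cubeSum_le {φ : Ω → ℝ} (hm : Measurable φ) (hi : Integrable φ μ)
    (hφ : 0 ≤ φ) {t : ℝ} (ht : 0 < t) (M : ℕ) :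
    μ.real {x | ∃ n : ℕ, 1 ≤ n ∧ n ≤ M ∧ t * (n : ℝ) ^ d < cubeSum d φ n x} ≤
      3 ^ d * (∫ x, φ x ∂μ) / t := by
  have hE := measurableSet_exists_lt_cubeSum (d := d) hm t M
  have hpt := mul_cubeSum_indicator_le (d := d) hφ ht.le M
  set E := {x : Ω | ∃ n : ℕ, 1 ≤ n ∧ n ≤ M ∧ t * (n : ℝ) ^ d < cubeSum d φ n x}
  have hcube (N : ℕ) : t * ((N : ℝ) ^ d * μ.real E) ≤
      3 ^ d * (((N + M : ℕ) : ℝ) ^ d * ∫ x, φ x ∂μ) := by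
    have h1 : Integrable (E.indicator (1 : Ω → ℝ)) μ := (integrable_const (1 : ℝ)).indicator hE
    rw [← integral_indicator_one hE, ← integral_cubeSum h1, ← integral_cubeSum hi,
      ← integral_const_mul, ← integral_const_mul]
    exact integral_mono ((integrable_cubeSum h1 N).const_mul _)
      ((integrable_cubeSum hi (N + M)).const_mul _) (hpt N)
  have hlim := (tendsto_sub_pow_div_pow d
    (tendsto_const_div_atTop_nhds_zero_nat (M : ℝ))).mul_const (μ.real E * t)
  rw [one_mul] at hlim
  rw [le_div_iff₀ ht]
  refine le_of_tendsto hlim ?_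
  filter_upwards [eventually_gt_atTop M] with n hn
  have hn0 : (0 : ℝ) < (n : ℝ) ^ d := pow_pos (Nat.cast_pos.2 (M.zero_le.trans_lt hn)) d
  have := hcube (n - M)
  rw [Nat.sub_add_cancel hn.le] at this
  rw [div_mul_eq_mul_div, div_le_iff₀ hn0]
  linarith

theorem measureReal_exists_lt_cubeSum_le {φ : Ω → ℝ} (hm : Measurable φ) (hi : Integrable φ μ)
    (hφ : 0 ≤ φ) {t : ℝ} (ht : 0 < t) :
    μ.real {x | ∃ n : ℕ, 1 ≤ n ∧ t * (n : ℝ) ^ d < cubeSum d φ n x} ≤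
      3 ^ d * (∫ x, φ x ∂μ) / t := by
  let E (M : ℕ) : Set Ω := {x | ∃ n : ℕ, 1 ≤ n ∧ n ≤ M ∧ t * (n : ℝ) ^ d < cubeSum d φ n x}
  have hunion : {x | ∃ n : ℕ, 1 ≤ n ∧ t * (n : ℝ) ^ d < cubeSum d φ n x} = ⋃ M, E M := by
    ext x
    simp only [E, Set.mem_iUnion, Set.mem_ofPred_eq]
    exact ⟨fun ⟨n, h1, hlt⟩ => ⟨n, n, h1, le_rfl, hlt⟩, fun ⟨_, n, h1, _, hlt⟩ => ⟨n, h1, hlt⟩⟩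
  have hmono : Monotone E := fun _ _ hM _ ⟨n, h1, hle, hlt⟩ => ⟨n, h1, hle.trans hM, hlt⟩
  have hlim := (ENNReal.tendsto_toReal (measure_ne_top μ _)).comp
    (tendsto_measure_iUnion_atTop (μ := μ) hmono)
  rw [hunion]
  exact le_of_tendsto' hlim fun M => measureReal_exists_le_lt_cubeSum_le hm hi hφ ht M

end Invariant

variable [ErgodicVAdd (Site d) Ω μ] [IsProbabilityMeasure μ]

theorem ae_eventually_abs_cubeSum_sub_le (hf : Measurable f) (hB : ∀ x, |f x| ≤ B)
    {t : ℝ} (ht : 0 < t) :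
    ∀ᵐ x ∂μ, ∀ᶠ n : ℕ in atTop,
      |cubeSum d f n x - (∫ y, f y ∂μ) * (n : ℝ) ^ d| ≤ t * (n : ℝ) ^ d := by
  set c := ∫ y, f y ∂μ
  set bad := {x | ¬ ∀ᶠ n : ℕ in atTop, |cubeSum d f n x - c * (n : ℝ) ^ d| ≤ t * (n : ℝ) ^ d}
  suffices hbad : ∀ η > 0, μ.real bad ≤ 0 + η from
    (measureReal_eq_zero_iff).1 (le_antisymm (le_of_forall_pos_le_add hbad) measureReal_nonneg)
  intro η hη
  have hfL : MemLp f 2 μ := .of_bound hf.aestronglyMeasurable B (ae_of_all _ hB)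
  obtain ⟨g, hg, hgc⟩ := exists_mem_orbitHull_integral_abs_sub_integral_le (M := Site d) hfL
    (show 0 < η * (t / 2) / 3 ^ d by positivity)
  have hgm := measurable_of_mem_orbitHull hf hg
  have hgi : Integrable g μ := (memLp_of_mem_orbitHull hfL hg).integrable (by norm_num)
  have hmax := measureReal_exists_lt_cubeSum_le (d := d) (hgm.sub_const c).abs
    (hgi.sub (integrable_const c)).abs (fun _ => abs_nonneg _) (half_pos ht)
  have hsub : bad ⊆ {x | ∃ n : ℕ, 1 ≤ n ∧
      t / 2 * (n : ℝ) ^ d < cubeSum d (fun y => |g y - c|) n x} := by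
    refine fun x hx => by_contra fun hgood => hx ?_
    simp only [Set.mem_ofPred_eq, not_exists, not_and, not_lt] at hgood
    filter_upwards [sameAverages_of_mem_orbitHull hB hg _ (half_pos ht), eventually_ge_atTop 1]
      with n hn h1
    calc |cubeSum d f n x - c * (n : ℝ) ^ d|
        ≤ |cubeSum d f n x - cubeSum d g n x| + |cubeSum d g n x - c * (n : ℝ) ^ d| :=
          abs_sub_le _ _ _
      _ ≤ t / 2 * (n : ℝ) ^ d + t / 2 * (n : ℝ) ^ d := by
          rw [abs_sub_comm]
          exact add_le_add (hn x) ((abs_cubeSum_sub_le g c n x).trans (hgood n h1))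
      _ = t * (n : ℝ) ^ d := by ring
  calc μ.real bad ≤ 3 ^ d * (∫ x, |g x - c| ∂μ) / (t / 2) := (measureReal_mono hsub).trans hmax
    _ ≤ 3 ^ d * (η * (t / 2) / 3 ^ d) / (t / 2) := by gcongr
    _ = 0 + η := by field_simp; ring

theorem ae_tendsto_cubeSum_div_pow (hf : Measurable f) (hB : ∀ x, |f x| ≤ B) :
    ∀ᵐ x ∂μ, Tendsto (fun n : ℕ => cubeSum d f n x / (n : ℝ) ^ d) atTop (𝓝 (∫ y, f y ∂μ)) := by
  have hall : ∀ᵐ x ∂μ, ∀ q : ℕ, ∀ᶠ n : ℕ in atTop,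
      |cubeSum d f n x - (∫ y, f y ∂μ) * (n : ℝ) ^ d| ≤ 1 / ((q : ℝ) + 1) * (n : ℝ) ^ d :=
    ae_all_iff.2 fun q => ae_eventually_abs_cubeSum_sub_le hf hB Nat.one_div_pos_of_nat
  filter_upwards [hall] with x hx
  refine Metric.tendsto_nhds.2 fun ε hε => ?_
  obtain ⟨q, hq⟩ := exists_nat_one_div_lt hε
  filter_upwards [hx q, eventually_gt_atTop 0] with n hn h0
  have hpow : (0 : ℝ) < (n : ℝ) ^ d := by positivity
  rw [Real.dist_eq, div_sub' hpow.ne', abs_div, abs_of_pos hpow, mul_comm ((n : ℝ) ^ d)]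
  exact ((div_le_iff₀ hpow).2 hn).trans_lt hq

end Lattice

/-! ### The shift as an ergodic action -/

theorem measurable_shift (r : Site d) : Measurable (shift r : Config A d → Config A d) :=
  measurable_pi_lambda _ fun i => measurable_pi_apply (i + r)

/-- The action of `ℤ_{≥0}^d` on configurations by shifts. -/
instance shiftAction : AddAction (Site d) (Config A d) where
  vadd := shift
  zero_vadd _ := rfl
  add_vadd r s x := funext fun i => congrArg x (by rw [add_assoc, add_comm r s])

instance : MeasurableConstVAdd (Site d) (Config A d) := ⟨measurable_shift⟩

theorem Stationary.vaddInvariantMeasure {μ : Measure (Config A d)} (hμ : Stationary μ) :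
    VAddInvariantMeasure (Site d) (Config A d) μ where
  measure_preimage_vadd r s hs := by
    rw [← Measure.map_apply (measurable_const_vadd r) hs]
    exact congrArg (· s) (hμ r)

theorem ErgodicShift.ergodicVAdd {μ : Measure (Config A d)} [IsProbabilityMeasure μ]
    (hμ : ErgodicShift μ) : ErgodicVAdd (Site d) (Config A d) μ :=
  have := hμ.1.vaddInvariantMeasure
  ergodicVAdd_of_forall_invariant hμ.2

/-! ### Grids of blocks inside a cube -/

/-- The lowest site of the block with index `r` in the `p`-shifted regular `m`-grid. -/
def corner (m : ℕ) (p r : Site d) : Site d := fun j => m * r j + p j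

/-- The indices of the blocks of the `p`-shifted regular `m`-grid that lie inside `Λ_k`. -/
def grid (m k : ℕ) (p : Site d) : Finset (Site d) :=
  (cube 0 (k / m)).filter fun r => ∀ j, corner m p r j + m ≤ k

theorem mem_grid {m k : ℕ} (hm : 0 < m) {p r : Site d} :
    r ∈ grid m k p ↔ ∀ j, corner m p r j + m ≤ k := by
  simp only [grid, Finset.mem_filter, mem_cube_zero, and_iff_right_iff_imp]
  intro h j
  rw [Nat.lt_iff_add_one_le, Nat.le_div_iff_mul_le hm]
  linarith [h j, show corner m p r j = m * r j + p j from rfl, mul_comm (r j) m]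

theorem card_grid_le (m k : ℕ) (p : Site d) : (grid m k p).card ≤ (k / m) ^ d :=
  (Finset.card_filter_le _ _).trans (card_cube _ _).le

theorem sum_sum_grid {G : Type*} [AddCommMonoid G] {m : ℕ} (hm : 0 < m) (k : ℕ)
    (g : Site d → G) :
    ∑ p ∈ cube 0 m, ∑ r ∈ grid m k p, g (corner m p r) = ∑ i ∈ cube 0 (k + 1 - m), g i := by
  rw [Finset.sum_sigma']
  refine Finset.sum_nbij' (fun a => corner m a.1 a.2)
    (fun i => ⟨fun j => i j % m, fun j => i j / m⟩) ?_ ?_ ?_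
    (fun i _ => funext fun j => Nat.div_add_mod (i j) m) fun _ _ => rfl
  · rintro ⟨p, r⟩ h
    have hr := (mem_grid hm).1 (Finset.mem_sigma.1 h).2
    exact mem_cube_zero.2 fun j => by have := hr j; lia
  · refine fun i hi => Finset.mem_sigma.2
      ⟨mem_cube_zero.2 fun j => Nat.mod_lt _ hm, (mem_grid hm).2 fun j => ?_⟩
    simp only [corner, Nat.div_add_mod]
    have := mem_cube_zero.1 hi j
    lia
  · rintro ⟨p, r⟩ h
    have hp := mem_cube_zero.1 (Finset.mem_sigma.1 h).1
    have hmod (j : Fin d) : p j % m = p j := Nat.mod_eq_of_lt (hp j)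
    have hdiv (j : Fin d) : p j / m = 0 := Nat.div_eq_of_lt (hp j)
    simp only [corner, Nat.mul_add_mod_self_left, Nat.mul_add_div hm, hmod, hdiv, add_zero]

/-- The sites of the blocks with index in `R`, as an embedding into `Λ_k`. -/
def gridEmbedding {m k : ℕ} (hm : 0 < m) {p : Site d} {R : Finset (Site d)}
    (hR : R ⊆ grid m k p) : R × (Fin d → Fin m) ↪ (Fin d → Fin k) where
  toFun a j := ⟨corner m p a.1 j + a.2 j, by
    have := (mem_grid hm).1 (hR a.1.2) j
    lia⟩
  inj' := by
    rintro ⟨⟨r, hr⟩, a⟩ ⟨⟨r', hr'⟩, a'⟩ h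
    have hval (j : Fin d) : m * r j + a j = m * r' j + a' j := by
      have := congrArg Fin.val (congrFun h j)
      simp only [corner] at this
      lia
    obtain rfl : r = r' := funext fun j => by
      have := congrArg (· / m) (hval j)
      simpa [Nat.mul_add_div hm, Nat.div_eq_of_lt (a j).2, Nat.div_eq_of_lt (a' j).2] using this
    obtain rfl : a = a' := funext fun j => Fin.ext (by have := hval j; lia)
    rfl

theorem card_mul_pow_le_of_subset_grid {m k : ℕ} (hm : 0 < m) {p : Site d} {R : Finset (Site d)}
    (hR : R ⊆ grid m k p) : R.card * m ^ d ≤ k ^ d := by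
  simpa using Fintype.card_le_of_embedding (gridEmbedding hm hR)

theorem subw_corner [NeZero A] {m k : ℕ} (hm : 0 < m) {p : Site d} {R : Finset (Site d)}
    (hR : R ⊆ grid m k p) (w : Word A d k) (r : R) :
    subw w m (corner m p r) = fun i => w (gridEmbedding hm hR (r, i)) :=
  funext fun i => dif_pos fun j => (gridEmbedding hm hR (r, i) j).2

/-- The blocks are independent under the counting measure, and each coordinate outside them
contributes a factor `|α|`. -/
theorem sum_prod_comp_embedding {ι J I α K : Type*} [Fintype ι] [Fintype J] [DecidableEq J]
    [Fintype I] [DecidableEq I] [Fintype α] [CommSemiring K] (e : ι × J ↪ I) (ψ : (J → α) → K) :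
    ∑ w : I → α, ∏ r : ι, ψ (fun j => w (e (r, j))) =
      (∑ u, ψ u) ^ Fintype.card ι *
        (Fintype.card α : K) ^ (Fintype.card I - Fintype.card ι * Fintype.card J) := by
  classical
  let U := {i // i ∉ Set.range e}
  let split : (I → α) ≃ (ι → J → α) × (U → α) :=
    (Equiv.piEquivPiSubtypeProd (· ∈ Set.range e) fun _ => α).trans <|
      (((Equiv.ofInjective e e.injective).arrowCongr (Equiv.refl α)).symm.trans
        (Equiv.curry ι J α)).prodCongr (Equiv.refl _)
  have hU : Fintype.card U = Fintype.card I - Fintype.card ι * Fintype.card J := by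
    rw [Fintype.card_subtype_compl, ← Fintype.card_prod]
    exact congrArg _ (Set.card_range_of_injective e.injective)
  calc ∑ w : I → α, ∏ r : ι, ψ (fun j => w (e (r, j)))
      = ∑ a : (ι → J → α) × (U → α), ∏ r, ψ (a.1 r) :=
        Fintype.sum_equiv split _ _ fun _ => rfl
    _ = (∑ u, ψ u) ^ Fintype.card ι * (Fintype.card α : K) ^ Fintype.card U := by
        rw [Fintype.sum_prod_type_right]
        have hprod := Finset.prod_univ_sum (fun _ : ι => Finset.univ) fun _ => ψ
        simp only [Finset.prod_const, Finset.card_univ, Fintype.piFinset_univ] at hprod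
        simp [hprod, mul_comm]
    _ = _ := by rw [hU]

theorem sum_prod_subw [NeZero A] {K : Type*} [CommSemiring K] {m k : ℕ} (hm : 0 < m) {p : Site d}
    {R : Finset (Site d)} (hR : R ⊆ grid m k p) (ψ : Word A d m → K) :
    ∑ w : Word A d k, ∏ r ∈ R, ψ (subw w m (corner m p r)) =
      (∑ u, ψ u) ^ R.card * (A : K) ^ (k ^ d - R.card * m ^ d) := by
  simp_rw [← Finset.prod_coe_sort R, subw_corner hm hR]
  simpa using sum_prod_comp_embedding (gridEmbedding hm hR) ψ

/-! ### Marginal distributions of words -/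

theorem measurable_wordAt (k : ℕ) (c : Site d) :
    Measurable fun x : Config A d => wordAt x k c :=
  measurable_pi_lambda _ fun _ => measurable_pi_apply _

theorem wordAt_vadd (x : Config A d) (k : ℕ) (c : Site d) :
    wordAt (c +ᵥ x) k 0 = wordAt x k c :=
  funext fun i => congrArg x (funext fun j => by simp [add_comm])

theorem subw_wordAt [NeZero A] (x : Config A d) {m k : ℕ} (c s : Site d)
    (hs : ∀ j, s j + m ≤ k) : subw (wordAt x k c) m s = wordAt x m (c + s) := by
  funext i
  have hi (j : Fin d) : s j + (i j : ℕ) < k := by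
    have := hs j
    lia
  simp only [subw, wordAt, hi, implies_true, dite_true, Pi.add_apply, add_assoc]

theorem wordDist_nonneg (μ : Measure (Config A d)) (k : ℕ) (w : Word A d k) :
    0 ≤ wordDist μ k w := ENNReal.toReal_nonneg

section Marginals

variable {μ : Measure (Config A d)} [IsProbabilityMeasure μ]

theorem integral_comp_wordAt (k : ℕ) (g : Word A d k → ℝ) :
    ∫ x, g (wordAt x k 0) ∂μ = ∑ w, wordDist μ k w * g w := by
  have hm := measurable_wordAt (A := A) k (0 : Site d)
  have := Measure.isProbabilityMeasure_map (μ := μ) hm.aemeasurable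
  rw [← integral_map hm.aemeasurable (measurable_of_countable g).aestronglyMeasurable,
    integral_fintype .of_finite]
  refine Finset.sum_congr rfl fun w _ => congrArg (· * g w) ?_
  rw [measureReal_def, Measure.map_apply hm (measurableSet_singleton w)]
  rfl

theorem sum_wordDist (k : ℕ) : ∑ w, wordDist μ k w = 1 := by
  simpa using (integral_comp_wordAt (μ := μ) k fun _ => 1).symm

theorem wordDist_le_one (k : ℕ) (w : Word A d k) : wordDist μ k w ≤ 1 :=
  measureReal_le_one

theorem measureReal_wordAt_mem (k : ℕ) (S : Set (Word A d k)) [DecidablePred (· ∈ S)] :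
    μ.real {x | wordAt x k 0 ∈ S} = ∑ w with w ∈ S, wordDist μ k w := by
  have hS : MeasurableSet {x : Config A d | wordAt x k 0 ∈ S} :=
    measurable_wordAt k 0 S.to_countable.measurableSet
  rw [← integral_indicator_one hS, Finset.sum_filter]
  refine (integral_comp_wordAt (μ := μ) k (S.indicator 1)).trans ?_
  simp [Set.indicator_apply]

end Marginals

/-! ### The cardinality of the typical sampling set -/

section Counting

variable {μ : Measure (Config A d)} [IsProbabilityMeasure μ] [NeZero A] {h δ : ℝ} {m k : ℕ}

open Classical in
theorem ncard_setOf_subw_mem (hm : 0 < m) (S : Set (Word A d m)) (w : Word A d k) (p : Site d) :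
    Set.ncard {r : Site d | (∀ j, m * r j + p j + m ≤ k) ∧
      subw w m (fun j => m * r j + p j) ∈ S} =
      ((grid m k p).filter fun r => subw w m (corner m p r) ∈ S).card := by
  rw [← Set.ncard_coe_finset]
  congr 1
  ext r
  rw [Finset.mem_coe, Finset.mem_filter, mem_grid hm]
  rfl

theorem ncard_setOf_forall_subw_mem (hm : 0 < m) {p : Site d} {R : Finset (Site d)}
    (hR : R ⊆ grid m k p) (S : Set (Word A d m)) :
    Set.ncard {w : Word A d k | ∀ r ∈ R, subw w m (corner m p r) ∈ S} =
      S.ncard ^ R.card * A ^ (k ^ d - R.card * m ^ d) := by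
  classical
  have hsum := sum_prod_subw (K := ℕ) (k := k) hm hR fun u => if u ∈ S then 1 else 0
  simp only [Finset.prod_ite_zero, Finset.prod_const_one, Finset.sum_boole, Nat.cast_id] at hsum
  simpa only [Set.ncard_eq_toFinset_card', Set.toFinset_ofPred, Set.filter_mem_univ_eq_toFinset]
    using hsum

theorem ncard_entropyTypical_le (h δ : ℝ) (m : ℕ) :
    (Set.ncard (entropyTypical μ h δ m) : ℝ) ≤ (A : ℝ) ^ ((m : ℝ) ^ d * (h + δ)) := by
  classical
  have hA : (0 : ℝ) < A := by exact_mod_cast NeZero.pos A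
  set S := entropyTypical μ h δ m
  have hle : S.ncard * (A : ℝ) ^ (-((m : ℝ) ^ d * (h + δ))) ≤ 1 :=
    calc S.ncard * (A : ℝ) ^ (-((m : ℝ) ^ d * (h + δ)))
        = ∑ _u with _u ∈ S, (A : ℝ) ^ (-((m : ℝ) ^ d * (h + δ))) := by
          rw [Finset.sum_const, nsmul_eq_mul, ← Set.ncard_coe_finset, Finset.coe_filter_univ]
          rfl
      _ ≤ ∑ u with u ∈ S, wordDist μ m u :=
          Finset.sum_le_sum fun u hu => (Finset.mem_filter.1 hu).2.1
      _ ≤ 1 := by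
          rw [← measureReal_wordAt_mem]
          exact measureReal_le_one
  rwa [Real.rpow_neg hA.le, mul_inv_le_iff₀ (by positivity), one_mul] at hle

theorem ncard_setOf_forall_subw_mem_entropyTypical_le (hm : 0 < m) (hh : 0 ≤ h) (hδ : δ ≤ 1)
    {p : Site d} {R : Finset (Site d)} (hR : R ⊆ grid m k p)
    (hcard : (1 - δ) * ((k : ℝ) / (m : ℝ)) ^ d ≤ R.card) :
    (Set.ncard {w : Word A d k | ∀ r ∈ R, subw w m (corner m p r) ∈ entropyTypical μ h δ m} : ℝ) ≤
      (A : ℝ) ^ ((k : ℝ) ^ d * (h + 2 * δ - δ ^ 2)) := by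
  have hA : (1 : ℝ) ≤ A := by exact_mod_cast NeZero.one_le
  have hA0 : (0 : ℝ) < A := zero_lt_one.trans_le hA
  have hle := card_mul_pow_le_of_subset_grid hm hR
  rw [ncard_setOf_forall_subw_mem hm hR]
  push_cast
  calc (Set.ncard (entropyTypical μ h δ m) : ℝ) ^ R.card * (A : ℝ) ^ (k ^ d - R.card * m ^ d)
      ≤ ((A : ℝ) ^ ((m : ℝ) ^ d * (h + δ))) ^ R.card * (A : ℝ) ^ (k ^ d - R.card * m ^ d) := by
        gcongr
        exact ncard_entropyTypical_le h δ m
    _ = (A : ℝ) ^ ((m : ℝ) ^ d * (h + δ) * R.card + ((k : ℝ) ^ d - R.card * (m : ℝ) ^ d)) := by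
        rw [Real.rpow_add hA0, Real.rpow_mul hA0.le _ (R.card : ℝ), Real.rpow_natCast,
          ← Real.rpow_natCast (A : ℝ) (_ - _), Nat.cast_sub hle]
        push_cast
        rfl
    _ ≤ (A : ℝ) ^ ((k : ℝ) ^ d * (h + 2 * δ - δ ^ 2)) := by
        refine Real.rpow_le_rpow_of_exponent_le hA ?_
        have hle' : (R.card : ℝ) * (m : ℝ) ^ d ≤ (k : ℝ) ^ d := by exact_mod_cast hle
        rw [div_pow, mul_div_assoc', div_le_iff₀ (by positivity)] at hcard
        nlinarith [mul_nonneg (sub_nonneg.2 hle') hh,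
          mul_nonneg (sub_nonneg.2 hcard) (sub_nonneg.2 hδ)]

/-- The pairs of an offset `p ∈ Λ_m` and a set of at least `(1-δ)(k/m)^d` blocks of the
`p`-shifted `m`-grid in `Λ_k`, i.e. the possible locations of the entropy typical blocks that put
a word into the typical sampling set. -/
noncomputable def denseBlockSets (d : ℕ) (δ : ℝ) (m k : ℕ) :
    Finset (Σ _ : Site d, Finset (Site d)) :=
  (cube 0 m).sigma fun p =>
    (grid m k p).powerset.filter fun R => (1 - δ) * ((k : ℝ) / (m : ℝ)) ^ d ≤ R.card

theorem card_denseBlockSets_le (d : ℕ) (δ : ℝ) (m k : ℕ) :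
    (denseBlockSets d δ m k).card ≤ m ^ d * 2 ^ (k / m) ^ d := by
  rw [denseBlockSets, Finset.card_sigma, ← card_cube (0 : Site d) m, ← smul_eq_mul]
  refine Finset.sum_le_card_nsmul _ _ _ fun p _ => (Finset.card_filter_le _ _).trans ?_
  rw [Finset.card_powerset]
  exact Nat.pow_le_pow_right two_pos (card_grid_le m k p)

theorem samplingTypical_subset (μ : Measure (Config A d)) (h δ : ℝ) (hm : 0 < m) (k : ℕ) :
    samplingTypical μ h δ m k ⊆ ⋃ a ∈ denseBlockSets d δ m k,
      {w | ∀ r ∈ a.2, subw w m (corner m a.1 r) ∈ entropyTypical μ h δ m} := by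
  classical
  rintro w ⟨p, hp, hcard⟩
  rw [ncard_setOf_subw_mem hm] at hcard
  set R := (grid m k p).filter fun r => subw w m (corner m p r) ∈ entropyTypical μ h δ m
  have hmem : (⟨p, R⟩ : Σ _ : Site d, Finset (Site d)) ∈ denseBlockSets d δ m k :=
    Finset.mem_sigma.2 ⟨mem_cube_zero.2 hp, Finset.mem_filter.2
      ⟨Finset.mem_powerset.2 (Finset.filter_subset _ _), hcard⟩⟩
  exact Set.mem_biUnion hmem fun r (hr : r ∈ R) => (Finset.mem_filter.1 hr).2

theorem ncard_samplingTypical_le (hA : 2 ≤ A) (hm : 0 < m) (hh : 0 ≤ h) (hδ : δ ≤ 1) :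
    (Set.ncard (samplingTypical μ h δ m k) : ℝ) ≤
      (A : ℝ) ^ ((m : ℝ) ^ d + ((k / m : ℕ) : ℝ) ^ d + (k : ℝ) ^ d * (h + 2 * δ - δ ^ 2)) := by
  set typicalOn : (Σ _ : Site d, Finset (Site d)) → Set (Word A d k) := fun a =>
    {w | ∀ r ∈ a.2, subw w m (corner m a.1 r) ∈ entropyTypical μ h δ m}
  have hA0 : (0 : ℝ) < A := by exact_mod_cast NeZero.pos A
  have hcard : ((denseBlockSets d δ m k).card : ℝ) ≤ (A : ℝ) ^ m ^ d * (A : ℝ) ^ (k / m) ^ d := by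
    have hpow : m ^ d ≤ A ^ m ^ d := (Nat.lt_pow_self (by lia)).le
    exact_mod_cast (card_denseBlockSets_le d δ m k).trans
      (Nat.mul_le_mul hpow (Nat.pow_le_pow_left hA _))
  calc (Set.ncard (samplingTypical μ h δ m k) : ℝ)
      ≤ ∑ a ∈ denseBlockSets d δ m k, ((typicalOn a).ncard : ℝ) := by
        exact_mod_cast (Set.ncard_le_ncard (samplingTypical_subset μ h δ hm k)).trans
          (Finset.set_ncard_biUnion_le _ typicalOn)
    _ ≤ (denseBlockSets d δ m k).card • (A : ℝ) ^ ((k : ℝ) ^ d * (h + 2 * δ - δ ^ 2)) := by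
        refine Finset.sum_le_card_nsmul _ _ _ fun a ha => ?_
        obtain ⟨hR, hc⟩ := Finset.mem_filter.1 (Finset.mem_sigma.1 ha).2
        exact ncard_setOf_forall_subw_mem_entropyTypical_le hm hh hδ (Finset.mem_powerset.1 hR) hc
    _ ≤ (A : ℝ) ^ m ^ d * (A : ℝ) ^ (k / m) ^ d *
          (A : ℝ) ^ ((k : ℝ) ^ d * (h + 2 * δ - δ ^ 2)) := by
        rw [nsmul_eq_mul]
        gcongr
    _ = _ := by
        simp only [Real.rpow_add hA0, ← Real.rpow_natCast, Nat.cast_pow]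

end Counting

/-! ### Information and entropy -/

/-- The information function `x ↦ -log μ^k(x(Λ_k))`. -/
noncomputable def information (μ : Measure (Config A d)) (k : ℕ) (x : Config A d) : ℝ :=
  -Real.logb A (wordDist μ k (wordAt x k 0))

theorem measurable_information (μ : Measure (Config A d)) (k : ℕ) :
    Measurable (information μ k) :=
  (measurable_of_countable fun w : Word A d k => -Real.logb A (wordDist μ k w)).comp
    (measurable_wordAt k 0)

theorem exists_abs_information_le (μ : Measure (Config A d)) (k : ℕ) :
    ∃ B, ∀ x, |information μ k x| ≤ B := by
  obtain ⟨B, hB⟩ := (Set.finite_range fun w : Word A d k =>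
    |-Real.logb A (wordDist μ k w)|).bddAbove
  exact ⟨B, fun x => hB ⟨wordAt x k 0, rfl⟩⟩

section Entropy

variable {μ : Measure (Config A d)} [IsProbabilityMeasure μ]

theorem information_nonneg (hA : 2 ≤ A) (k : ℕ) (x : Config A d) : 0 ≤ information μ k x :=
  neg_nonneg.2 (Real.logb_nonpos (by exact_mod_cast hA) (wordDist_nonneg μ k _)
    (wordDist_le_one k _))

theorem integral_information (k : ℕ) : ∫ x, information μ k x ∂μ = entH A (wordDist μ k) :=
  (integral_comp_wordAt k fun w => -Real.logb A (wordDist μ k w)).trans (by simp [entH])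

theorem HasEntropyRate.nonneg (hA : 2 ≤ A) {h : ℝ} (hrate : HasEntropyRate μ h) : 0 ≤ h := by
  refine ge_of_tendsto' hrate fun n => div_nonneg ?_ (by positivity)
  rw [← integral_information]
  exact integral_nonneg (information_nonneg hA n)

theorem ae_wordDist_pos (hμ : Stationary μ) (k : ℕ) :
    ∀ᵐ x ∂μ, ∀ i : Site d, 0 < wordDist μ k (wordAt x k i) := by
  have := hμ.vaddInvariantMeasure
  have h0 : ∀ᵐ x ∂μ, 0 < wordDist μ k (wordAt x k 0) := by
    have hnull : μ.real {x | wordAt x k 0 ∈ {w | ¬ 0 < wordDist μ k w}} = 0 := by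
      rw [measureReal_wordAt_mem]
      exact Finset.sum_eq_zero fun w hw =>
        le_antisymm (not_lt.1 (Finset.mem_filter.1 hw).2) (wordDist_nonneg μ k w)
    exact (measureReal_eq_zero_iff).1 hnull
  refine ae_all_iff.2 fun i => ?_
  filter_upwards [(measurePreserving_vadd i μ).quasiMeasurePreserving.ae h0] with x hx
  rwa [← wordAt_vadd]

theorem measureReal_wordDist_lt_mul_le {k : ℕ} {q : Word A d k → ℝ} (hq : 0 ≤ q) {ε : ℝ}
    (hε : 0 ≤ ε) : μ.real {x | wordAt x k 0 ∈ {w | wordDist μ k w < ε * q w}} ≤ ε * ∑ w, q w := by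
  rw [measureReal_wordAt_mem, Finset.mul_sum]
  exact (Finset.sum_le_sum fun w hw => (Finset.mem_filter.1 hw).2.le).trans <|
    Finset.sum_le_sum_of_subset_of_nonneg (Finset.filter_subset _ _) fun w _ _ =>
      mul_nonneg hε (hq w)

end Entropy

theorem neg_mul_logb_le (hA : 2 ≤ A) {t N a b : ℝ} (ht : 0 ≤ t) (hN : 1 ≤ N) (hb : 0 ≤ b)
    (hab : a ≤ b) :
    -(t * Real.logb A t) ≤ b * t - (b - a) * (if (A : ℝ) ^ (-a) < t then t else 0) +
      Real.logb A N * (if t < (A : ℝ) ^ (-b) then t else 0) + 1 / (N * Real.log A) := by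
  have hA1 : (1 : ℝ) < A := by exact_mod_cast hA
  have hlogA := Real.log_pos hA1
  have hpos : 0 < 1 / (N * Real.log A) := by positivity
  rcases ht.eq_or_lt with rfl | ht
  · simpa using hpos.le
  simp only [← Real.logb_lt_iff_lt_rpow hA1 ht, ← Real.lt_logb_iff_rpow_lt hA1 ht]
  set l := Real.logb A t
  by_cases hlight : l < -b
  · rw [if_pos hlight, if_neg (by linarith)]
    have hlog : -l - Real.logb A N ≤ 1 / (N * Real.log A) / t := by
      have hle := Real.log_le_self (x := 1 / (N * t)) (by positivity)
      rw [one_div, Real.log_inv, Real.log_mul (by positivity) ht.ne'] at hle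
      have heq : -l - Real.logb A N = (-(Real.log N + Real.log t)) / Real.log A := by
        simp only [l, Real.logb]
        ring
      rw [heq, div_le_iff₀ hlogA]
      refine hle.trans_eq ?_
      field_simp
    rw [le_div_iff₀ ht] at hlog
    nlinarith [mul_nonneg hb ht.le]
  rw [if_neg hlight]
  by_cases hheavy : -a < l
  · rw [if_pos hheavy]
    nlinarith
  · rw [if_neg hheavy]
    nlinarith

/-- Outcomes of probability above `A^{-a}` contribute at most `a` times their mass to the
entropy, intermediate ones at most `b` times their mass, and the rest is controlled by the
uniform distribution. -/
theorem entH_le_sub_heavy_add_light {W : Type*} [Fintype W] (hA : 2 ≤ A) {p : W → ℝ}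
    (hp : ∀ w, 0 ≤ p w) (hsum : ∑ w, p w = 1) {a b : ℝ} (hb : 0 ≤ b) (hab : a ≤ b) :
    entH A p ≤ b - (b - a) * (∑ w with (A : ℝ) ^ (-a) < p w, p w) +
      Real.logb A (Fintype.card W) * (∑ w with p w < (A : ℝ) ^ (-b), p w) + 1 / Real.log A := by
  have hW : 0 < Fintype.card W := Fintype.card_pos_iff.2 <| by
    by_contra hempty
    rw [not_nonempty_iff] at hempty
    simp at hsum
  have hN : (1 : ℝ) ≤ Fintype.card W := by exact_mod_cast hW
  rw [entH, ← Finset.sum_neg_distrib]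
  refine (Finset.sum_le_sum fun w _ => neg_mul_logb_le hA (hp w) hN hb hab).trans_eq ?_
  simp only [Finset.sum_add_distrib, Finset.sum_sub_distrib, ← Finset.mul_sum, hsum,
    Finset.sum_filter, Finset.sum_const, Finset.card_univ, nsmul_eq_mul, mul_one]
  field_simp

theorem logb_natCast_le_of_le_rpow (hA : 2 ≤ A) {n : ℕ} {y : ℝ} (hy : 0 ≤ y)
    (hn : (n : ℝ) ≤ (A : ℝ) ^ y) : Real.logb A n ≤ y := by
  rcases n.eq_zero_or_pos with rfl | hpos
  · simpa using hy
  · exact (Real.logb_le_iff_le_rpow (by exact_mod_cast hA) (by exact_mod_cast hpos)).2 hn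

theorem logb_ncard_word_le [NeZero A] (hA : 2 ≤ A) {k : ℕ} (S : Set (Word A d k)) :
    Real.logb A S.ncard ≤ (k : ℝ) ^ d := by
  refine logb_natCast_le_of_le_rpow hA (by positivity) ?_
  have hcard : Nat.card (Word A d k) = A ^ k ^ d := by simp
  exact_mod_cast (Set.ncard_le_card S).trans_eq hcard

theorem eventually_logb_ncard_samplingTypical_le {μ : Measure (Config A d)}
    [IsProbabilityMeasure μ] [NeZero A] (hA : 2 ≤ A) (hd : d ≠ 0) {h δ : ℝ} (hh : 0 ≤ h)
    (hδ : 0 < δ) {m : ℕ → ℕ} (hm : Tendsto m atTop atTop)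
    (hmk : Tendsto (fun k : ℕ => (m k : ℝ) / (k : ℝ)) atTop (𝓝 0)) :
    ∀ᶠ k : ℕ in atTop,
      Real.logb A (Set.ncard (samplingTypical μ h δ (m k) k)) / (k : ℝ) ^ d ≤ h + 2 * δ := by
  have hlim : Tendsto (fun k : ℕ => ((m k : ℝ) / k) ^ d + (1 / (m k : ℝ)) ^ d) atTop (𝓝 0) := by
    simpa [hd] using (hmk.pow d).add
      (((tendsto_one_div_atTop_nhds_zero_nat (𝕜 := ℝ)).comp hm).pow d)
  filter_upwards [hlim.eventually (gt_mem_nhds (show 0 < δ ^ 2 by positivity)),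
    hm.eventually_gt_atTop 0, eventually_gt_atTop 0] with k hk hm0 hk0
  rw [div_le_iff₀ (by positivity)]
  rcases le_or_gt δ 1 with hδ1 | hδ1
  · have hrate : 0 ≤ h + 2 * δ - δ ^ 2 := by nlinarith
    refine (logb_natCast_le_of_le_rpow hA (by positivity)
      (ncard_samplingTypical_le hA hm0 hh hδ1)).trans ?_
    have hoffsets : (m k : ℝ) ^ d = (k : ℝ) ^ d * ((m k : ℝ) / k) ^ d := by
      rw [← mul_pow, mul_div_cancel₀ _ (by positivity)]
    have hblocks : ((k / m k : ℕ) : ℝ) ^ d ≤ (k : ℝ) ^ d * (1 / (m k : ℝ)) ^ d := by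
      rw [← mul_pow, mul_one_div]
      gcongr
      exact Nat.cast_div_le
    rw [hoffsets]
    nlinarith [show 0 < (k : ℝ) ^ d by positivity]
  · refine (logb_ncard_word_le hA _).trans (le_mul_of_one_le_left (by positivity) ?_)
    linarith

/-! ### The Shannon–McMillan theorem -/

/-- The unnormalised mixture, over the offsets `p ∈ Λ_k`, of the probability measures on `m`-words
that fill the blocks of the `p`-shifted `k`-grid independently according to `μ^k`, and the
remaining sites uniformly. -/
noncomputable def gridMixture [NeZero A] (μ : Measure (Config A d)) (k m : ℕ) (w : Word A d m) :
    ℝ :=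
  ∑ p ∈ cube 0 k, (∏ r ∈ grid k m p, wordDist μ k (subw w k (corner k p r))) /
    (A : ℝ) ^ (m ^ d - (grid k m p).card * k ^ d)

theorem gridMixture_nonneg [NeZero A] (μ : Measure (Config A d)) (k m : ℕ) :
    0 ≤ gridMixture μ k m := fun _ =>
  Finset.sum_nonneg fun _ _ => div_nonneg (Finset.prod_nonneg fun _ _ => wordDist_nonneg μ k _)
    (by positivity)

theorem exists_sum_grid_add_le {k : ℕ} (hk : 0 < k) (m : ℕ) {F : Site d → ℝ} (hF : 0 ≤ F) :
    ∃ p ∈ cube 0 k, ∑ r ∈ grid k m p, F (corner k p r) +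
        ((m : ℝ) ^ d - (grid k m p).card * (k : ℝ) ^ d) ≤
      (∑ i ∈ cube 0 m, F i) / (k : ℝ) ^ d + ((m : ℝ) ^ d - ((m + 1 - k : ℕ) : ℝ) ^ d) := by
  have hkd : (0 : ℝ) < (k : ℝ) ^ d := by positivity
  have hblocks : ∑ p ∈ cube (0 : Site d) k, ((grid k m p).card : ℝ) =
      ((m + 1 - k : ℕ) : ℝ) ^ d := by
    simpa [card_cube] using sum_sum_grid (d := d) hk m fun _ => (1 : ℝ)
  have hsub : ∑ i ∈ cube 0 (m + 1 - k), F i ≤ ∑ i ∈ cube 0 m, F i :=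
    Finset.sum_le_sum_of_subset_of_nonneg (cube_mono 0 (by lia)) fun i _ _ => hF i
  refine Finset.exists_le_of_sum_le ⟨0, mem_cube_zero.2 fun _ => hk⟩ ?_
  rw [Finset.sum_add_distrib, Finset.sum_sub_distrib, sum_sum_grid hk, ← Finset.sum_mul, hblocks,
    Finset.sum_const, Finset.sum_const, card_cube, nsmul_eq_mul, nsmul_eq_mul, Nat.cast_pow,
    mul_add, mul_div_cancel₀ _ hkd.ne']
  linarith

theorem prod_wordDist_div_eq_rpow [NeZero A] {μ : Measure (Config A d)} (hA : 2 ≤ A) {k : ℕ}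
    (hk : 0 < k) (m : ℕ) {x : Config A d} (hx : ∀ i : Site d, 0 < wordDist μ k (wordAt x k i))
    (p : Site d) :
    (∏ r ∈ grid k m p, wordDist μ k (subw (wordAt x m 0) k (corner k p r))) /
        (A : ℝ) ^ (m ^ d - (grid k m p).card * k ^ d) =
      (A : ℝ) ^ (-(∑ r ∈ grid k m p, information μ k (corner k p r +ᵥ x) +
        ((m : ℝ) ^ d - (grid k m p).card * (k : ℝ) ^ d))) := by
  have hA1 : (1 : ℝ) < A := by exact_mod_cast hA
  have hA0 : (0 : ℝ) < A := by linarith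
  have hblock : ∀ r ∈ grid k m p, wordDist μ k (subw (wordAt x m 0) k (corner k p r)) =
      (A : ℝ) ^ (-information μ k (corner k p r +ᵥ x)) := fun r hr => by
    rw [subw_wordAt x 0 (corner k p r) ((mem_grid hk).1 hr), zero_add, information, neg_neg,
      wordAt_vadd, Real.rpow_logb hA0 hA1.ne' (hx _)]
  rw [Finset.prod_congr rfl hblock, ← Real.rpow_sum_of_pos hA0, ← Real.rpow_natCast (A : ℝ) (_ - _),
    ← Real.rpow_sub hA0, Nat.cast_sub (card_mul_pow_le_of_subset_grid hk subset_rfl),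
    Finset.sum_neg_distrib]
  congr 1
  push_cast
  ring

theorem ae_eventually_mul_le_wordDist {μ : Measure (Config A d)} [IsProbabilityMeasure μ]
    (hA : 2 ≤ A) (hd : d ≠ 0) {q : (m : ℕ) → Word A d m → ℝ} (hq : ∀ m, 0 ≤ q m) {C : ℝ}
    (hC : ∀ m, ∑ w, q m w ≤ C) {ε : ℝ} (hε : 0 < ε) :
    ∀ᵐ x ∂μ, ∀ᶠ m : ℕ in atTop,
      (A : ℝ) ^ (-(ε * (m : ℝ) ^ d)) * q m (wordAt x m 0) ≤ wordDist μ m (wordAt x m 0) := by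
  have hA1 : (1 : ℝ) < A := by exact_mod_cast hA
  have hbound (m : ℕ) : μ.real {x | wordAt x m 0 ∈
      {w | wordDist μ m w < (A : ℝ) ^ (-(ε * (m : ℝ) ^ d)) * q m w}} ≤
        ((A : ℝ) ^ (-ε)) ^ m * C := by
    refine (measureReal_wordDist_lt_mul_le (hq m) (by positivity)).trans ?_
    have hm : (m : ℝ) ≤ (m : ℝ) ^ d := by exact_mod_cast Nat.le_self_pow hd m
    rw [← Real.rpow_mul_natCast (by positivity), neg_mul]
    gcongr
    exacts [Finset.sum_nonneg fun w _ => hq m w, hA1.le, hC m]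
  have hsummable : Summable fun m => ((A : ℝ) ^ (-ε)) ^ m * C :=
    (summable_geometric_of_lt_one (by positivity)
      (Real.rpow_lt_one_of_one_lt_of_neg hA1 (neg_lt_zero.2 hε))).mul_right C
  have hBC := (hsummable.of_nonneg_of_le (fun _ => measureReal_nonneg) hbound).tsum_ofReal_ne_top
  simp only [fun s => ofReal_measureReal (μ := μ) (s := s)] at hBC
  filter_upwards [ae_eventually_notMem hBC] with x hx
  exact hx.mono fun m => not_lt.1

theorem tendsto_measureReal_of_ae_eventually_notMem {Ω : Type*} [MeasurableSpace Ω]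
    {ν : Measure Ω} [IsFiniteMeasure ν] {s : ℕ → Set Ω} (hs : ∀ n, MeasurableSet (s n))
    (h : ∀ᵐ x ∂ν, ∀ᶠ n in atTop, x ∉ s n) : Tendsto (fun n => ν.real (s n)) atTop (𝓝 0) := by
  have hlim := tendsto_measure_of_ae_tendsto_indicator_of_isFiniteMeasure atTop
    MeasurableSet.empty hs (μ := ν) (by simpa using h)
  rw [measure_empty] at hlim
  exact (ENNReal.tendsto_toReal ENNReal.zero_ne_top).comp hlim

theorem mul_measureReal_lt_wordDist_le {μ : Measure (Config A d)} [IsProbabilityMeasure μ]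
    (hA : 2 ≤ A) {h δ ε : ℝ} (hh : 0 ≤ h) (hδ : 0 ≤ δ) (hε : 0 ≤ ε) {m : ℕ} (hm : 0 < m) :
    δ * μ.real {x | wordAt x m 0 ∈ {w | (A : ℝ) ^ (-((m : ℝ) ^ d * (h - δ))) < wordDist μ m w}} ≤
      h + ε - entH A (wordDist μ m) / (m : ℝ) ^ d +
        μ.real {x | wordAt x m 0 ∈ {w | wordDist μ m w < (A : ℝ) ^ (-((m : ℝ) ^ d * (h + ε)))}} +
        1 / Real.log A / (m : ℝ) ^ d := by
  have hK : (0 : ℝ) < (m : ℝ) ^ d := by positivity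
  have hcard : Real.logb A (Fintype.card (Word A d m)) = (m : ℝ) ^ d := by
    have hA1 : (1 : ℝ) < A := by exact_mod_cast hA
    simp [Real.logb_pow, Real.logb_self_eq_one hA1]
  have hent := entH_le_sub_heavy_add_light hA (wordDist_nonneg μ m) (sum_wordDist m)
    (show 0 ≤ (m : ℝ) ^ d * (h + ε) by positivity)
    (show (m : ℝ) ^ d * (h - δ) ≤ (m : ℝ) ^ d * (h + ε) by gcongr; linarith)
  rw [hcard] at hent
  rw [measureReal_wordAt_mem, measureReal_wordAt_mem]
  simp only [Set.mem_ofPred_eq]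
  set heavy := ∑ w with (A : ℝ) ^ (-((m : ℝ) ^ d * (h - δ))) < wordDist μ m w, wordDist μ m w
  set light := ∑ w with wordDist μ m w < (A : ℝ) ^ (-((m : ℝ) ^ d * (h + ε))), wordDist μ m w
  have hheavy : 0 ≤ heavy := Finset.sum_nonneg fun w _ => wordDist_nonneg μ m w
  rw [← mul_le_mul_iff_of_pos_left hK]
  have hcost : 0 ≤ (m : ℝ) ^ d * (ε * heavy) := by positivity
  field_simp
  field_simp at hent
  nlinarith

section ShannonMcMillan

variable {μ : Measure (Config A d)} [IsProbabilityMeasure μ] [NeZero A] {h : ℝ} {k : ℕ}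

theorem sum_gridMixture (hk : 0 < k) (m : ℕ) : ∑ w, gridMixture μ k m w = (k : ℝ) ^ d := by
  have hA : (A : ℝ) ≠ 0 := by exact_mod_cast NeZero.ne A
  simp only [gridMixture]
  rw [Finset.sum_comm]
  simp [← Finset.sum_div, sum_prod_subw hk subset_rfl, sum_wordDist, hA, card_cube]

theorem exists_rpow_le_gridMixture (hA : 2 ≤ A) (hk : 0 < k) (m : ℕ)
    {x : Config A d} (hx : ∀ i : Site d, 0 < wordDist μ k (wordAt x k i)) :
    (A : ℝ) ^ (-(cubeSum d (information μ k) m x / (k : ℝ) ^ d +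
      ((m : ℝ) ^ d - ((m + 1 - k : ℕ) : ℝ) ^ d))) ≤ gridMixture μ k m (wordAt x m 0) := by
  obtain ⟨p, hp, hle⟩ := exists_sum_grid_add_le hk m
    (F := fun i : Site d => information μ k (i +ᵥ x)) fun i => information_nonneg hA k _
  refine (Real.rpow_le_rpow_of_exponent_le (by exact_mod_cast NeZero.one_le)
    (neg_le_neg hle)).trans ?_
  rw [← prod_wordDist_div_eq_rpow hA hk m hx p]
  exact Finset.single_le_sum (f := fun p =>
    (∏ r ∈ grid k m p, wordDist μ k (subw (wordAt x m 0) k (corner k p r))) /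
      (A : ℝ) ^ (m ^ d - (grid k m p).card * k ^ d))
    (fun p _ => div_nonneg (Finset.prod_nonneg fun _ _ => wordDist_nonneg μ k _) (by positivity)) hp

theorem ErgodicShift.ae_eventually_rpow_le_wordDist (hA : 2 ≤ A) (hd : d ≠ 0)
    (hμ : ErgodicShift μ) (hrate : HasEntropyRate μ h) {ε : ℝ} (hε : 0 < ε) :
    ∀ᵐ x ∂μ, ∀ᶠ m : ℕ in atTop,
      (A : ℝ) ^ (-((m : ℝ) ^ d * (h + ε))) ≤ wordDist μ m (wordAt x m 0) := by
  have := hμ.ergodicVAdd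
  have hA1 : (1 : ℝ) < A := by exact_mod_cast hA
  have hA0 : (0 : ℝ) < A := by linarith
  obtain ⟨k, hkh, hk⟩ := ((hrate.eventually (gt_mem_nhds (show h < h + ε / 2 by linarith))).and
    (eventually_gt_atTop 0)).exists
  have hkd : (0 : ℝ) < (k : ℝ) ^ d := by positivity
  rw [div_lt_iff₀ hkd, ← integral_information] at hkh
  obtain ⟨B, hB⟩ := exists_abs_information_le μ k
  have hboundary := eventually_mul_pow_le_sub_pow d
    (tendsto_const_div_atTop_nhds_zero_nat ((k - 1 : ℕ) : ℝ)) (show 0 < ε / 4 by positivity)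
  filter_upwards [ae_wordDist_pos hμ.1 k,
    ae_tendsto_cubeSum_div_pow (d := d) (measurable_information μ k) hB,
    ae_eventually_mul_le_wordDist (μ := μ) hA hd (gridMixture_nonneg μ k)
      (fun m => (sum_gridMixture hk m).le) (show 0 < ε / 4 by positivity)] with x hpos hlim hcode
  filter_upwards [hlim.eventually (gt_mem_nhds hkh), hcode, hboundary, eventually_gt_atTop 0]
    with m hsum hcode hboundary hm
  refine le_trans ?_ (le_trans (mul_le_mul_of_nonneg_left
    (exists_rpow_le_gridMixture hA hk m hpos) (by positivity)) hcode)
  rw [← Real.rpow_add hA0]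
  refine Real.rpow_le_rpow_of_exponent_le hA1.le ?_
  have havg : cubeSum d (information μ k) m x / (k : ℝ) ^ d ≤ (h + ε / 2) * (m : ℝ) ^ d := by
    rw [div_lt_iff₀ (by positivity)] at hsum
    rw [div_le_iff₀ hkd]
    linarith
  rw [show m + 1 - k = m - (k - 1) by lia]
  linarith

theorem ErgodicShift.tendsto_measureReal_wordDist_lt (hA : 2 ≤ A) (hd : d ≠ 0)
    (hμ : ErgodicShift μ) (hrate : HasEntropyRate μ h) {ε : ℝ} (hε : 0 < ε) :
    Tendsto (fun m : ℕ => μ.real {x | wordAt x m 0 ∈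
      {w | wordDist μ m w < (A : ℝ) ^ (-((m : ℝ) ^ d * (h + ε)))}}) atTop (𝓝 0) := by
  refine tendsto_measureReal_of_ae_eventually_notMem
    (fun m => measurable_wordAt m 0 (Set.to_countable _).measurableSet) ?_
  filter_upwards [hμ.ae_eventually_rpow_le_wordDist hA hd hrate hε] with x hx
  exact hx.mono fun m => not_lt.2

theorem ErgodicShift.tendsto_measureReal_lt_wordDist (hA : 2 ≤ A) (hd : d ≠ 0)
    (hμ : ErgodicShift μ) (hrate : HasEntropyRate μ h) {δ : ℝ} (hδ : 0 < δ) :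
    Tendsto (fun m : ℕ => μ.real {x | wordAt x m 0 ∈
      {w | (A : ℝ) ^ (-((m : ℝ) ^ d * (h - δ))) < wordDist μ m w}}) atTop (𝓝 0) := by
  refine tendsto_order.2 ⟨fun a ha => .of_forall fun m => ha.trans_le measureReal_nonneg,
    fun η hη => ?_⟩
  have hε : 0 < δ * η / 2 := by positivity
  have hpow : Tendsto (fun m : ℕ => (m : ℝ) ^ d) atTop atTop :=
    (tendsto_pow_atTop hd).comp tendsto_natCast_atTop_atTop
  have hlim := (((hrate.const_sub (h + δ * η / 2)).add
    (hμ.tendsto_measureReal_wordDist_lt hA hd hrate hε)).add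
      (hpow.const_div_atTop (1 / Real.log A)))
  filter_upwards [hlim.eventually (gt_mem_nhds (show _ < δ * η by linarith)),
    eventually_gt_atTop 0] with m hbound hm
  exact lt_of_mul_lt_mul_left
    ((mul_measureReal_lt_wordDist_le hA (hrate.nonneg hA) hδ.le hε.le hm).trans_lt hbound) hδ.le

theorem ErgodicShift.tendsto_measureReal_notMem_entropyTypical (hA : 2 ≤ A) (hd : d ≠ 0)
    (hμ : ErgodicShift μ) (hrate : HasEntropyRate μ h) {δ : ℝ} (hδ : 0 < δ) :
    Tendsto (fun m : ℕ => μ.real {x | wordAt x m 0 ∈ (entropyTypical μ h δ m)ᶜ}) atTop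
      (𝓝 0) := by
  have hlim := (hμ.tendsto_measureReal_wordDist_lt hA hd hrate hδ).add
    (hμ.tendsto_measureReal_lt_wordDist hA hd hrate hδ)
  rw [add_zero] at hlim
  refine squeeze_zero (fun _ => measureReal_nonneg) (fun m => ?_) hlim
  refine (measureReal_mono fun x hx => ?_).trans (measureReal_union_le _ _)
  simpa [entropyTypical, imp_iff_not_or] using hx

end ShannonMcMillan

/-! ### The empirical mass of the typical sampling set -/

open Classical in
theorem empProb_eq_card_div (x : Config A d) (k n : ℕ) (S : Set (Word A d k)) :
    empProb x k n S = ((cube 0 (n / k)).filter fun r => wordAt x k (fun j => k * r j) ∈ S).card /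
      ((n / k : ℕ) : ℝ) ^ d := by
  rw [empProb, ← Set.ncard_coe_finset,
    ← Set.ncard_image_of_injective _ (f := fun (r : Fin d → Fin (n / k)) j => (r j : ℕ))
      fun r r' h => funext fun j => Fin.ext (congrFun h j)]
  congr 3
  ext r
  simp only [Set.mem_image, Set.mem_ofPred_eq, Finset.coe_filter, mem_cube_zero]
  constructor
  · rintro ⟨r, hr, rfl⟩
    exact ⟨fun j => (r j).2, hr⟩
  · rintro ⟨hlt, hr⟩
    exact ⟨fun j => ⟨r j, hlt j⟩, hr, rfl⟩

theorem sum_card_filter_block_le (k n : ℕ) (P : Site d → Prop) [DecidablePred P] :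
    ∑ r ∈ cube 0 (n / k), ((cube (fun j => k * r j) k).filter P).card ≤
      ((cube 0 n).filter P).card := by
  have hblock {r i : Site d} (hi : i ∈ cube (fun j => k * r j) k) (j : Fin d) : i j / k = r j :=
    have hij := mem_cube.1 hi j
    Nat.div_eq_of_lt_le (by lia) (by lia)
  rw [← Finset.card_biUnion]
  · refine Finset.card_le_card (Finset.biUnion_subset.2 fun r hr => Finset.filter_subset_filter P
      fun i hi => mem_cube_zero.2 fun j => ?_)
    have hrj := mem_cube_zero.1 hr j
    rw [← hblock hi j] at hrj
    exact Nat.lt_of_div_lt_div hrj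
  · refine fun r _ r' _ hne => Finset.disjoint_left.2 fun i hi hi' => hne (funext fun j => ?_)
    rw [← hblock (Finset.mem_filter.1 hi).1 j, hblock (Finset.mem_filter.1 hi').1 j]

theorem eventually_pow_le_two_mul_div_pow (d : ℕ) {k : ℕ} (hk : 0 < k) :
    ∀ᶠ n : ℕ in atTop, (n : ℝ) ^ d ≤ 2 * ((k : ℝ) ^ d * ((n / k : ℕ) : ℝ) ^ d) := by
  filter_upwards [eventually_mul_pow_le_sub_pow d
    (tendsto_const_div_atTop_nhds_zero_nat (k : ℝ)) (one_half_pos (α := ℝ))] with n hn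
  have hfloor : n - k ≤ k * (n / k) := by
    have := Nat.div_add_mod n k
    have := Nat.mod_lt n hk
    lia
  have hpow : ((n - k : ℕ) : ℝ) ^ d ≤ ((k * (n / k) : ℕ) : ℝ) ^ d := by gcongr
  rw [Nat.cast_mul, mul_pow] at hpow
  linarith

theorem ErgodicShift.ae_tendsto_card_filter_wordAt_mem_div_pow {μ : Measure (Config A d)}
    [IsProbabilityMeasure μ] (hμ : ErgodicShift μ) {m : ℕ} (S : Set (Word A d m))
    [DecidablePred (· ∈ S)] :
    ∀ᵐ x ∂μ, Tendsto (fun n : ℕ =>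
      (((cube 0 n).filter fun i => wordAt x m i ∈ S).card : ℝ) / (n : ℝ) ^ d) atTop
        (𝓝 (μ.real {x | wordAt x m 0 ∈ S})) := by
  have := hμ.ergodicVAdd
  have hS : MeasurableSet {x : Config A d | wordAt x m 0 ∈ S} :=
    measurable_wordAt m 0 S.to_countable.measurableSet
  filter_upwards [ae_tendsto_cubeSum_div_pow (d := d) (μ := μ) (measurable_one.indicator hS)
    (B := 1) fun x => by by_cases hx : wordAt x m 0 ∈ S <;> simp [hx]] with x hx
  rw [integral_indicator_one hS] at hx
  refine hx.congr fun n => ?_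
  simp [cubeSum, Set.indicator_apply, wordAt_vadd]

section EmpiricalMass

variable {μ : Measure (Config A d)} [NeZero A] {h δ : ℝ} {m k : ℕ}

open Classical in
theorem wordAt_mem_samplingTypical (hm : 0 < m) {x : Config A d} {c : Site d}
    (hc : (1 - δ) * (k : ℝ) ^ d ≤
      ((cube c (k + 1 - m)).filter fun i => wordAt x m i ∈ entropyTypical μ h δ m).card) :
    wordAt x k c ∈ samplingTypical μ h δ m k := by
  rw [Finset.natCast_card_filter, ← sum_cube_zero_add, ← sum_sum_grid hm] at hc
  have hconst : ∑ _p ∈ cube (0 : Site d) m, (1 - δ) * ((k : ℝ) / (m : ℝ)) ^ d =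
      (1 - δ) * (k : ℝ) ^ d := by
    rw [Finset.sum_const, card_cube, nsmul_eq_mul, Nat.cast_pow, div_pow]
    field_simp
  obtain ⟨p, hp, hle⟩ := Finset.exists_le_of_sum_le ⟨0, mem_cube_zero.2 fun _ => hm⟩
    (hconst.trans_le hc)
  refine ⟨p, mem_cube_zero.1 hp, hle.trans_eq ?_⟩
  rw [ncard_setOf_subw_mem hm, Finset.natCast_card_filter]
  refine Finset.sum_congr rfl fun r hr => ?_
  rw [subw_wordAt x c (corner m p r) ((mem_grid hm).1 hr), add_comm]

open Classical in
theorem lt_card_filter_of_wordAt_notMem_samplingTypical (hm : 0 < m)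
    (hmk : (1 - δ / 2) * (k : ℝ) ^ d ≤ ((k + 1 - m : ℕ) : ℝ) ^ d) {x : Config A d} {c : Site d}
    (hx : wordAt x k c ∉ samplingTypical μ h δ m k) :
    δ / 2 * (k : ℝ) ^ d <
      ((cube c k).filter fun i => wordAt x m i ∉ entropyTypical μ h δ m).card := by
  have hfew := not_le.1 (mt (wordAt_mem_samplingTypical hm) hx)
  have hsplit : ((cube c (k + 1 - m)).filter fun i => wordAt x m i ∈ entropyTypical μ h δ m).card +
      ((cube c (k + 1 - m)).filter fun i => wordAt x m i ∉ entropyTypical μ h δ m).card =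
        (k + 1 - m) ^ d :=
    (Finset.card_filter_add_card_filter_not _).trans (card_cube c _)
  have hmono : ((cube c (k + 1 - m)).filter fun i => wordAt x m i ∉ entropyTypical μ h δ m).card ≤
      ((cube c k).filter fun i => wordAt x m i ∉ entropyTypical μ h δ m).card :=
    Finset.card_le_card (Finset.filter_subset_filter _ (cube_mono c (by lia)))
  rify at hsplit hmono
  linarith

open Classical in
theorem lt_empProb_samplingTypical {ε : ℝ} {n : ℕ} (hm : 0 < m) (hk : 0 < k) (hkn : k ≤ n)
    (hδ : 0 < δ) (hε : 0 < ε) {x : Config A d}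
    (hmk : (1 - δ / 2) * (k : ℝ) ^ d ≤ ((k + 1 - m : ℕ) : ℝ) ^ d)
    (hn : (n : ℝ) ^ d ≤ 2 * ((k : ℝ) ^ d * ((n / k : ℕ) : ℝ) ^ d))
    (hbad : (((cube 0 n).filter fun i => wordAt x m i ∉ entropyTypical μ h δ m).card : ℝ) ≤
      δ * ε / 8 * (n : ℝ) ^ d) :
    1 - ε < empProb x k n (samplingTypical μ h δ m k) := by
  have hN : 0 < n / k := Nat.div_pos hkn hk
  set T := samplingTypical μ h δ m k
  set good := (cube 0 (n / k)).filter fun r => wordAt x k (fun j => k * r j) ∈ T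
  set bad := (cube 0 (n / k)).filter fun r => wordAt x k (fun j => k * r j) ∉ T
  have hcount : bad.card * (δ / 2 * (k : ℝ) ^ d) ≤ δ * ε / 8 * (n : ℝ) ^ d := by
    refine le_trans ?_ ((Nat.cast_le.2 (sum_card_filter_block_le k n _)).trans hbad)
    rw [← nsmul_eq_mul, Nat.cast_sum]
    exact (Finset.card_nsmul_le_sum _ _ _ fun r hr =>
      (lt_card_filter_of_wordAt_notMem_samplingTypical hm hmk (Finset.mem_filter.1 hr).2).le).trans
        (Finset.sum_le_sum_of_subset_of_nonneg (Finset.filter_subset _ _)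
          fun _ _ _ => by positivity)
  have hfew : (bad.card : ℝ) ≤ ε / 2 * ((n / k : ℕ) : ℝ) ^ d := by
    refine le_of_mul_le_mul_right (hcount.trans ?_)
      (show 0 < δ / 2 * (k : ℝ) ^ d by positivity)
    calc δ * ε / 8 * (n : ℝ) ^ d
        ≤ δ * ε / 8 * (2 * ((k : ℝ) ^ d * ((n / k : ℕ) : ℝ) ^ d)) := by gcongr
      _ = ε / 2 * ((n / k : ℕ) : ℝ) ^ d * (δ / 2 * (k : ℝ) ^ d) := by ring
  have hsplit : (good.card : ℝ) + bad.card = ((n / k : ℕ) : ℝ) ^ d := by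
    exact_mod_cast (Finset.card_filter_add_card_filter_not _).trans (card_cube 0 (n / k))
  have hNd : (0 : ℝ) < ((n / k : ℕ) : ℝ) ^ d := by positivity
  rw [empProb_eq_card_div, lt_div_iff₀ hNd]
  nlinarith

theorem ErgodicShift.ae_eventually_lt_empProb [IsProbabilityMeasure μ] (hA : 2 ≤ A) (hd : d ≠ 0)
    (hμ : ErgodicShift μ) (hrate : HasEntropyRate μ h) {ε : ℝ} (hδ : 0 < δ) (hε : 0 < ε)
    {m : ℕ → ℕ} (hm : Tendsto m atTop atTop)
    (hmk : Tendsto (fun k : ℕ => (m k : ℝ) / (k : ℝ)) atTop (𝓝 0)) :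
    ∀ᵐ x ∂μ, ∀ᶠ k in atTop, ∀ᶠ n in atTop,
      1 - ε < empProb x k n (samplingTypical μ h δ (m k) k) := by
  classical
  filter_upwards [ae_all_iff.2 fun l =>
    hμ.ae_tendsto_card_filter_wordAt_mem_div_pow (entropyTypical μ h δ l)ᶜ] with x hx
  filter_upwards [(((hμ.tendsto_measureReal_notMem_entropyTypical hA hd hrate hδ).eventually
      (gt_mem_nhds (show 0 < δ * ε / 8 by positivity))).filter_mono hm),
    hm.eventually_gt_atTop 0, eventually_mul_pow_le_sub_pow d hmk (half_pos hδ),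
    eventually_gt_atTop 0] with k hbad hm0 hboundary hk
  filter_upwards [(hx (m k)).eventually (gt_mem_nhds hbad), eventually_pow_le_two_mul_div_pow d hk,
    eventually_ge_atTop k] with n hbad hn hkn
  rw [div_lt_iff₀ (by have := hk.trans_le hkn; positivity)] at hbad
  refine lt_empProb_samplingTypical hm0 hk hkn hδ hε (hboundary.trans ?_) hn hbad.le
  gcongr
  lia

end EmpiricalMass

theorem sampling_typical_properties_general [NeZero A] (hA : 2 ≤ A) (hd : d ≠ 0)
    {μ : Measure (Config A d)} [IsProbabilityMeasure μ] (hμ : ErgodicShift μ) {h : ℝ}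
    (hrate : HasEntropyRate μ h) {δ ε : ℝ} (hδ : 0 < δ) (hε : 0 < ε) {m : ℕ → ℕ}
    (hm : Tendsto m atTop atTop)
    (hmk : Tendsto (fun k : ℕ => (m k : ℝ) / (k : ℝ)) atTop (𝓝 0)) :
    (∃ k0 : ℕ, ∀ k ≥ k0,
      Real.logb A (Set.ncard (samplingTypical μ h δ (m k) k)) / (k : ℝ) ^ d ≤ h + 2 * δ) ∧
    ∀ᵐ x ∂μ, ∃ k1 : ℕ, ∀ k ≥ k1, ∃ n0 : ℕ, ∀ n ≥ n0,
      1 - ε < empProb x k n (samplingTypical μ h δ (m k) k) := by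
  refine ⟨eventually_atTop.1
    (eventually_logb_ncard_samplingTypical_le hA hd (hrate.nonneg hA) hδ hm hmk), ?_⟩
  filter_upwards [hμ.ae_eventually_lt_empProb hA hd hrate hδ hε hm hmk] with x hx
  exact (eventually_atTop.1 hx).imp fun _ hk1 k hk => eventually_atTop.1 (hk1 k hk)

/-- For ergodic `μ` with entropy rate `h`, `δ ∈ (0,1/2)` and any
`m = m(k) → ∞` with `m(k)/k → 0`: (i) eventually in `k`, the typical sampling set
`𝒯_k^μ(δ/2, m(k))` has log-cardinality at most `(h+δ)k^d`; and (ii) almost surely, for every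
sufficiently large `k` its empirical mass eventually exceeds `1-δ`. -/
theorem sampling_typical_properties
    (A d : ℕ) [NeZero A] (hA : 2 ≤ A) (hd : 1 ≤ d)
    (μ : Measure (Config A d)) [IsProbabilityMeasure μ] (hμ : ErgodicShift μ)
    (h : ℝ) (hrate : HasEntropyRate μ h)
    (δ : ℝ) (hδ0 : 0 < δ) (hδ1 : δ < 1 / 2)
    (m : ℕ → ℕ) (hm1 : Tendsto m atTop atTop)
    (hm2 : Tendsto (fun k : ℕ => (m k : ℝ) / (k : ℝ)) atTop (𝓝 0)) :
    (∃ k0 : ℕ, ∀ k ≥ k0,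
      Real.logb A (Set.ncard (samplingTypical μ h (δ / 2) (m k) k)) / (k : ℝ) ^ d ≤ h + δ) ∧
    ∀ᵐ x ∂μ, ∃ k1 : ℕ, ∀ k ≥ k1, ∃ n0 : ℕ, ∀ n ≥ n0,
      1 - δ < empProb x k n (samplingTypical μ h (δ / 2) (m k) k) := by
  simpa only [mul_div_cancel₀ δ two_ne_zero] using sampling_typical_properties_general hA
    (Nat.one_le_iff_ne_zero.1 hd) hμ hrate (half_pos hδ0) hδ0 hm1 hm2

end SRU1408
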